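/- arXiv:1909.08586 — 4 statements merged into one kernel-verified Lean document; each statement's English description precedes it below -/
import Mathlib

section
/- Fix s = (s₀,s₁,s₂) with 0 < s₀ ≤ s₁ ≤ s₂ and fix ε > 0. Then for all sufficiently large n and every i ∈ {0,1,2}, the (n²−2)-dimensional surface area of every codimension-1 facet of P_n(s) corresponding to an edge of E_i(T_n) is bounded above by ((2e + ε) s₀ / s_i) · |P_n(s)|^{1 − 1/(n²−1)}. -/
/-!
Write `d = n² - 1`.  The functional `x ↦ ∇²x(e)` is represented by a mean-zero vector of norm `2`,
so the facet of an edge of class `i` lies at distance `s i / 2` from the origin.  The cones with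
apex `0` over the `n²` facets of class `i` lie in `P_n(s)` and overlap in null sets
(`facets_volume_le`), and these facets are congruent by translation of the torus
(`facet_measure_le`).  Hence `n² (s i / (2 d)) |F| ≤ |P_n(s)|` for each of them
(`facet_volume_le`), so that `|F| ≤ (2 / s i) |P_n(s)|`.

It remains to show that `|P_n(s)| ^ (1 / d)` is asymptotically at most `e s₀`.  The polytope is the
base of a prism of height one, the slab `0 ≤ ∑ x ≤ n` (`poly_measure_le`).  The integral, injective
map `twist` keeps the values of `x` on two axes of the torus and replaces all others by negatives of
hessians of class `0`; it does not decrease volume.  The numbers `s₀ - ∇²x(e)`, over the edges of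
class `0`, are nonnegative with sum `n² s₀`, so they lie in a simplex of volume at most
`e ^ (n²) s₀ ^ ((n - 1)²)`, while the `2n - 1` remaining coordinates are polynomially bounded
(`abs_bound`) and contribute a subexponential factor (`slab_volume_le`,
`eventually_volume_bound_le`).

Volumes in the statement are measured by Mathlib's Hausdorff measures `μH[k]`, which are not
normalised: on `k`-dimensional Euclidean space, Lebesgue measure is `volFactor k • μH[k]`.  Passing
from Lebesgue measures to Hausdorff measures needs
`volFactor d ^ (d - 1) ≤ volFactor (d - 1) ^ d` (`volFactor_pow_le`).  Since `μH[k] B ≤ diam B ^ k`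
in dimension `k` (`hausdorff_le_ediam`), every coordinate projection of a set of diameter `D` in
dimension `k + 1` has volume at most `volFactor k * D ^ k`; the Loomis–Whitney inequality
(`loomis_whitney`) turns this into a bound for the volume of the set, and comparing it with the
definition of the Hausdorff measure bounds `volFactor (k + 1)`.
-/

open MeasureTheory Filter

/-- Discrete hessian of class `r` of `x : V(T_n) → ℝ` at the base vertex `v` of a unit
rhombus of the triangular lattice torus `T_n`, where `V(T_n)` is identified with
`ZMod n × ZMod n` via `1 ↦ (1,0)`, `ω ↦ (0,1)`.  For a rhombus `{a,b,c,d}` of class `r`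
(i.e. `b - a = z` with `z = 1, ω, ω²` respectively) the hessian is
`-x a + x b - x c + x d`. -/
def hess (n : ℕ) (r : Fin 3) (x : (ZMod n × ZMod n) → ℝ) (v : ZMod n × ZMod n) : ℝ :=
  if r = 0 then -x v + x (v + (1, 0)) - x (v + (2, 1)) + x (v + (1, 1))
  else if r = 1 then -x v + x (v + (0, 1)) - x (v + (-1, 1)) + x (v + (-1, 0))
  else -x v + x (v + (-1, -1)) - x (v + (-1, -2)) + x (v + (0, -1))

/-- The polytope `P_n(s)`: mean-zero functions on `V(T_n)` with `∇²x ≼ s`. -/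
def polyP (n : ℕ) [NeZero n] (s : Fin 3 → ℝ) : Set ((ZMod n × ZMod n) → ℝ) :=
  {x | (∑ v : ZMod n × ZMod n, x v) = 0 ∧ ∀ r v, hess n r x v ≤ s r}

/-- The polytope `P̃_n(s)`: functions on `V(T_n)` vanishing at `0` with `∇²x ≼ s`. -/
def polyPt (n : ℕ) [NeZero n] (s : Fin 3 → ℝ) : Set ((ZMod n × ZMod n) → ℝ) :=
  {x | x 0 = 0 ∧ ∀ r v, hess n r x v ≤ s r}

/-- The `d`-dimensional (Hausdorff) volume of a set of functions on `V(T_n)`, computed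
with respect to the Euclidean structure on `ℝ^{V(T_n)}`. -/
noncomputable def evol (n : ℕ) [NeZero n] (d : ℝ) (A : Set ((ZMod n × ZMod n) → ℝ)) : ℝ :=
  (μH[d] ((EuclideanSpace.equiv (ZMod n × ZMod n) ℝ).symm '' A)).toReal

/-- `f_n(s) = |P_n(s)|^{1/(n²-1)}`. -/
noncomputable def fn (n : ℕ) [NeZero n] (s : Fin 3 → ℝ) : ℝ :=
  evol n ((n : ℝ) ^ 2 - 1) (polyP n s) ^ (1 / ((n : ℝ) ^ 2 - 1))

/-- The codimension-1 facet of `P_n(s)` corresponding to the edge of class `r` based at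
vertex `v`: the face on which the constraint `∇²x(e) ≤ s_r` holds with equality. -/
def facet (n : ℕ) [NeZero n] (s : Fin 3 → ℝ) (r : Fin 3) (v : ZMod n × ZMod n) :
    Set ((ZMod n × ZMod n) → ℝ) :=
  {x ∈ polyP n s | hess n r x v = s r}

/-! ### Hausdorff measure and diameter -/

section Vitali
open Metric Set Module
open scoped Pointwise

/-- The isodiametric comparison for a convenient set `K`.  By the Vitali covering theorem the unit
ball is filled, up to a null set, by disjoint small homothetic copies of `K`.  If
`ediam K ^ k < μ K`, this covering would show that the ball has smaller Hausdorff measure than it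
has. -/
theorem hausdorff_le_ediam_core {E : Type*} [NormedAddCommGroup E] [NormedSpace ℝ E]
    [FiniteDimensional ℝ E] [MeasurableSpace E] [BorelSpace E] (K : Set E)
    (hK : IsCompact K) (h0 : (0 : E) ∈ K) (hi : (interior K).Nonempty)
    (hD : 0 < diam K) :
    μH[finrank ℝ E] K ≤ ediam K ^ finrank ℝ E := by
  set k := finrank ℝ E with hk
  set μ : Measure E := μH[finrank ℝ E] with hμ
  have hKpos : μ K ≠ 0 := (Measure.measure_pos_of_nonempty_interior μ hi).ne'
  have hKfin : μ K ≠ ⊤ := hK.measure_lt_top.ne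
  set D := diam K with hDdef
  have hDe : ediam K = ENNReal.ofReal D := by
    rw [hDdef, diam, ENNReal.ofReal_toReal hK.isBounded.ediam_ne_top]
  set B : E × ℝ → Set E := fun a => a.1 +ᵥ (a.2 • K) with hB
  have hμB : ∀ a : E × ℝ, 0 < a.2 → μ (B a) = ENNReal.ofReal (a.2 ^ k) * μ K := by
    intro a ha
    simp only [hB, measure_vadd, Measure.addHaar_smul]
    rw [abs_of_pos (by positivity)]
  have hdB : ∀ a : E × ℝ, 0 < a.2 → ediam (B a) = ENNReal.ofReal a.2 * ediam K := by
    intro a ha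
    simp only [hB, ediam_vadd, ediam_smul₀]
    rw [ENNReal.smul_def, smul_eq_mul]
    congr 1
    rw [← enorm_eq_nnnorm, Real.enorm_eq_ofReal ha.le]
  have hBsub : ∀ a : E × ℝ, 0 < a.2 → B a ⊆ closedBall a.1 (a.2 * D) := by
    rintro ⟨x, r⟩ hr y ⟨z, ⟨w, hw, rfl⟩, rfl⟩
    simp only [mem_closedBall, dist_eq_norm, vadd_eq_add, add_sub_cancel_left] at hr ⊢
    rw [norm_smul, Real.norm_of_nonneg hr.le]
    have : ‖w‖ ≤ D := by
      have := dist_le_diam_of_mem hK.isBounded hw h0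
      simpa [dist_eq_norm] using this
    gcongr
  have hBc : ∀ a : E × ℝ, IsClosed (B a) := fun a => ((hK.smul a.2).vadd a.1).isClosed
  set U : Set E := ball 0 1 with hU
  -- the Hausdorff measure is the supremum of these premeasures over all scales `δ`
  have key : ∀ δ : ENNReal, 0 < δ →
      OuterMeasure.mkMetric'.pre (fun s : Set E => ediam s ^ (k : ℝ)) δ U
        ≤ ediam K ^ k / μ K * μ U := by
    intro δ hδ
    obtain ⟨η, hη0, hηδ⟩ : ∃ η : ℝ, 0 < η ∧ ENNReal.ofReal η ≤ δ := by
      by_cases h : δ = ⊤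
      · exact ⟨1, one_pos, by simp [h]⟩
      · exact ⟨δ.toReal, ENNReal.toReal_pos hδ.ne' h, by rw [ENNReal.ofReal_toReal h]⟩
    set t : Set (E × ℝ) := {a | 0 < a.2 ∧ a.2 * D ≤ η ∧ B a ⊆ U} with ht
    obtain ⟨u, hut, huc, hud, hu0⟩ := Vitali.exists_disjoint_covering_ae μ U t
      (ENNReal.ofReal ((3 * D) ^ k) * μ (ball 0 1) / μ K).toNNReal
      (fun a => a.2 * D) (fun a => a.1) B (fun a ha => hBsub a ha.1)
      (by
        intro a ha
        have hap := ha.1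
        rw [ENNReal.coe_toNNReal, hμB a ha.1, Measure.addHaar_closedBall _ _ (by positivity)]
        · rw [← hk]
          have : (3 * (a.2 * D)) ^ k = a.2 ^ k * (3 * D) ^ k := by ring
          rw [this, ENNReal.ofReal_mul (by positivity), ENNReal.div_eq_inv_mul]
          calc _ = (ENNReal.ofReal (a.2 ^ k) * ENNReal.ofReal ((3 * D) ^ k) * μ (ball 0 1))
                * ((μ K)⁻¹ * μ K) := by
                rw [ENNReal.inv_mul_cancel hKpos hKfin, mul_one]
            _ ≤ _ := le_of_eq (by ring)
        · exact ENNReal.div_ne_top (ENNReal.mul_ne_top ENNReal.ofReal_ne_top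
            measure_ball_lt_top.ne) hKpos)
      (by
        intro a ha
        have h2 := (hi.smul_set (a := a.2)).vadd_set (a := a.1)
        refine h2.mono ?_
        refine interior_maximal (vadd_set_mono (smul_set_mono interior_subset)) ?_
        exact (isOpen_interior.smul₀ ha.1.ne').vadd a.1)
      (fun a _ => hBc a)
      (by
        intro x hx ε hε
        obtain ⟨ρ, hρ, hρU⟩ := Metric.isOpen_iff.1 (isOpen_ball : IsOpen U) x hx
        refine ⟨(x, min (min ε η) (ρ / 2) / D), ⟨?_, ?_, ?_⟩, ?_, rfl⟩
        · simp only; positivity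
        · simp only; rw [div_mul_cancel₀ _ hD.ne']
          exact (min_le_left _ _).trans (min_le_right _ _)
        · refine (hBsub _ (by simp only; positivity)).trans (Subset.trans ?_ hρU)
          simp only; rw [div_mul_cancel₀ _ hD.ne']
          exact closedBall_subset_ball (lt_of_le_of_lt (min_le_right _ _) (by linarith))
        · simp only; rw [div_mul_cancel₀ _ hD.ne']
          exact (min_le_left _ _).trans (min_le_left _ _))
    have : Countable u := huc
    set P := OuterMeasure.mkMetric'.pre (fun s : Set E => ediam s ^ (k : ℝ)) δ with hP
    have hPμ : ∀ s, P s ≤ μ s := by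
      intro s
      rw [hμ, Measure.hausdorffMeasure, ← OuterMeasure.coe_mkMetric, OuterMeasure.mkMetric,
        OuterMeasure.mkMetric']
      exact le_iSup₂ (f := fun r (_ : r > 0) => OuterMeasure.mkMetric'.pre
        (fun s : Set E => ediam s ^ (k : ℝ)) r) δ hδ s
    have hsum : ∑' a : u, μ (B a) ≤ μ U := by
      rw [← measure_biUnion huc hud (fun a _ => (hBc a).measurableSet)]
      exact measure_mono (iUnion₂_subset fun a ha => (hut ha).2.2)
    calc P U ≤ P (U \ ⋃ a ∈ u, B a) + P (⋃ a ∈ u, B a) := by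
          refine le_trans (measure_mono ?_) (measure_union_le _ _)
          exact fun x hx => by by_cases h : x ∈ ⋃ a ∈ u, B a <;> simp_all
      _ ≤ 0 + ∑' a : u, P (B a) := by
          gcongr
          · exact (hPμ _).trans hu0.le
          · exact measure_biUnion_le P huc B
      _ ≤ ∑' a : u, ediam K ^ k / μ K * μ (B a) := by
          rw [zero_add]
          refine ENNReal.tsum_le_tsum fun a => ?_
          have ha := hut a.2
          refine (OuterMeasure.mkMetric'.pre_le ?_).trans ?_
          · rw [hdB _ ha.1, hDe, ← ENNReal.ofReal_mul ha.1.le]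
            exact (ENNReal.ofReal_le_ofReal ha.2.1).trans hηδ
          · rw [hdB _ ha.1, hμB _ ha.1, ENNReal.rpow_natCast, mul_pow,
              ENNReal.ofReal_pow ha.1.le, ENNReal.div_eq_inv_mul]
            calc _ = (ENNReal.ofReal (a : E × ℝ).2 ^ k * ediam K ^ k) * ((μ K)⁻¹ * μ K) := by
                  rw [ENNReal.inv_mul_cancel hKpos hKfin, mul_one]
              _ ≤ _ := le_of_eq (by ring)
      _ = ediam K ^ k / μ K * ∑' a : u, μ (B a) := ENNReal.tsum_mul_left
      _ ≤ _ := by gcongr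
  have hfinal : μ U ≤ ediam K ^ k / μ K * μ U := by
    conv_lhs => rw [hμ, Measure.hausdorffMeasure, ← OuterMeasure.coe_mkMetric,
      OuterMeasure.mkMetric, OuterMeasure.mkMetric']
    simp only [OuterMeasure.iSup_apply]
    exact iSup₂_le fun δ hδ => key δ hδ
  have hU0 : μ U ≠ 0 := (measure_ball_pos μ 0 one_pos).ne'
  have hUt : μ U ≠ ⊤ := measure_ball_lt_top.ne
  have h1 : 1 ≤ ediam K ^ k / μ K := by
    by_contra h
    push Not at h
    have := ENNReal.mul_lt_mul_left hU0 hUt h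
    rw [one_mul] at this
    exact absurd hfinal (not_le.2 this)
  rwa [ENNReal.le_div_iff_mul_le (Or.inl hKpos) (Or.inl hKfin), one_mul] at h1

/-- The Hausdorff measure of top dimension of a set is at most the corresponding power of its
diameter. -/
theorem hausdorff_le_ediam {E : Type*} [NormedAddCommGroup E] [NormedSpace ℝ E]
    [FiniteDimensional ℝ E] [Nontrivial E] [MeasurableSpace E] [BorelSpace E] (B : Set E) :
    μH[finrank ℝ E] B ≤ ediam B ^ finrank ℝ E := by
  have hk : finrank ℝ E ≠ 0 := finrank_pos.ne'
  by_cases hb : ediam B = ⊤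
  · rw [hb, ENNReal.top_pow hk]; exact le_top
  -- passing to the closed convex hull does not change the diameter
  set K := closure (convexHull ℝ B) with hKdef
  have hBK : B ⊆ K := (subset_convexHull ℝ B).trans subset_closure
  have hdK : ediam K = ediam B := by rw [hKdef, ediam_closure, convexHull_ediam]
  have hKb : Bornology.IsBounded K := isBounded_iff_ediam_ne_top.2 (by rwa [hdK])
  have hKc : IsCompact K := isCompact_of_isClosed_isBounded isClosed_closure hKb
  have hconv : Convex ℝ K := (convex_convexHull ℝ B).closure
  rw [← hdK]
  refine (measure_mono hBK).trans ?_
  rcases (interior K).eq_empty_or_nonempty with hi | hi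
  · have : μH[finrank ℝ E] K = 0 := by
      have h := hconv.addHaar_frontier (μH[finrank ℝ E])
      rwa [frontier, hi, sdiff_empty, isClosed_closure.closure_eq] at h
    rw [this]; exact zero_le
  · obtain ⟨p, hp⟩ := hi
    have hpK := interior_subset hp
    have hsub : ¬ K.Subsingleton := by
      intro h
      have h2 : K = {p} := h.eq_singleton_of_mem hpK
      rw [h2, interior_singleton] at hp
      exact hp
    have hD : 0 < diam K := (diam_pos (not_subsingleton_iff.1 hsub) hKb)
    have := hausdorff_le_ediam_core (-p +ᵥ K) (hKc.vadd _) ⟨p, hpK, by simp⟩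
      (by rw [interior_vadd]; exact ⟨_, ⟨p, hp, rfl⟩⟩) (by rwa [diam_vadd])
    rwa [measure_vadd, ediam_vadd] at this

end Vitali

/-! ### The Loomis–Whitney inequality -/

section LW
open Metric Set Function
open scoped ENNReal

/-- Length of the intersection of `A` with the line through `x` in the `i`-th direction. -/
noncomputable def gridLen {k : ℕ} (A : Set (Fin (k + 1) → ℝ)) (i : Fin (k + 1))
    (x : Fin (k + 1) → ℝ) : ℝ≥0∞ :=
  ∫⁻ t : ℝ, A.indicator 1 (update x i t)

theorem measurable_gridLen {k : ℕ} {A : Set (Fin (k + 1) → ℝ)} (hA : MeasurableSet A)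
    (i : Fin (k + 1)) : Measurable (gridLen A i) := by
  refine Measurable.lintegral_prod_right' (f := fun p : (Fin (k + 1) → ℝ) × ℝ =>
    A.indicator 1 (update p.1 i p.2)) ?_
  refine (measurable_one.indicator hA).comp ?_
  exact measurable_update'

/-- On each line in direction `i` meeting `A`, the integral of the inverse length of the
intersection is at most `1`; such lines correspond to points of the projection of `A`. -/
theorem lintegral_gridLen_inv_le {k : ℕ} {A : Set (Fin (k + 1) → ℝ)} (hA : MeasurableSet A)
    (i : Fin (k + 1)) :
    ∫⁻ x in A, (gridLen A i x)⁻¹ ≤ volume ((fun x : Fin (k + 1) → ℝ => i.removeNth x) '' A) := by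
  have hm : Measurable fun x => A.indicator (fun x => (gridLen A i x)⁻¹) x :=
    (measurable_gridLen hA i).inv.indicator hA
  have hmp := (volume_preserving_piFinSuccAbove (fun _ : Fin (k + 1) => ℝ) i).symm
  rw [← lintegral_indicator hA, ← hmp.lintegral_comp hm, Measure.volume_eq_prod]
  have hm' := hm.comp (MeasurableEquiv.piFinSuccAbove (fun _ : Fin (k + 1) => ℝ) i).symm.measurable
  refine (lintegral_prod_symm' _ hm').trans_le ?_
  refine le_trans (lintegral_mono fun y => ?_) (lintegral_indicator_one_le _)
  have hy : ∀ t : ℝ, (MeasurableEquiv.piFinSuccAbove (fun _ : Fin (k + 1) => ℝ) i).symm (t, y)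
      = i.insertNth t y := fun t => rfl
  simp only [comp_apply, hy]
  have hlen : ∀ t : ℝ, gridLen A i (i.insertNth t y)
      = ∫⁻ t : ℝ, A.indicator 1 (i.insertNth (α := fun _ => ℝ) t y) := by
    intro t; simp [gridLen]
  set c := ∫⁻ t : ℝ, A.indicator (1 : (Fin (k + 1) → ℝ) → ℝ≥0∞) (i.insertNth (α := fun _ => ℝ) t y) with hc
  have hint : ∀ t : ℝ, A.indicator (fun x => (gridLen A i x)⁻¹) (i.insertNth t y)
      = c⁻¹ * A.indicator (1 : (Fin (k + 1) → ℝ) → ℝ≥0∞) (i.insertNth (α := fun _ => ℝ) t y) := by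
    intro t
    by_cases h : (i.insertNth (α := fun _ => ℝ) t y) ∈ A
    · simp only [indicator_of_mem h, hlen, Pi.one_apply, mul_one]
    · simp only [indicator_of_notMem h, mul_zero]
  simp only [hint]
  rw [lintegral_const_mul]
  · by_cases h : y ∈ (fun x : Fin (k + 1) → ℝ => i.removeNth x) '' A
    · rw [indicator_of_mem h]
      exact ENNReal.inv_mul_le_one _
    · have : c = 0 := by
        rw [hc]
        convert lintegral_zero with t
        rw [indicator_of_notMem]
        intro ht
        exact h ⟨_, ht, by simp⟩
      rw [← hc, this]; simp
  · refine (measurable_one.indicator hA).comp ?_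
    exact (MeasurableEquiv.piFinSuccAbove (fun _ : Fin (k + 1) => ℝ) i).symm.measurable.comp
      measurable_prodMk_right

/-- **Loomis–Whitney inequality** for bounded open sets.  The constant function `1` on `A` is written
as a product of powers of `∏ i, gridLen A i ^ (1 / k)`, whose integral is controlled by the
grid-lines lemma behind the Gagliardo–Nirenberg–Sobolev inequality, and of the functions
`(gridLen A i)⁻¹`, whose integrals are controlled by the projections; Hölder's inequality
concludes. -/
theorem loomis_whitney {k : ℕ} (hk : k ≠ 0) {A : Set (Fin (k + 1) → ℝ)} (hA : IsOpen A)
    (hb : Bornology.IsBounded A) :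
    volume A ^ k ≤ ∏ i : Fin (k + 1), volume ((fun x : Fin (k + 1) → ℝ => i.removeNth x) '' A) := by
  rcases A.eq_empty_or_nonempty with rfl | hne
  · simp [hk]
  have hV0 : volume A ≠ 0 := (hA.measure_pos volume hne).ne'
  have hVt : volume A ≠ ⊤ := hb.measure_lt_top.ne
  have hkR : (0 : ℝ) < k := by positivity
  have hpos : ∀ i, ∀ x ∈ A, gridLen A i x ≠ 0 ∧ gridLen A i x ≠ ⊤ := by
    intro i x hx
    have hcont : Continuous fun t : ℝ => update x i t := by fun_prop
    have hS : IsOpen ((fun t : ℝ => update x i t) ⁻¹' A) := hA.preimage hcont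
    have heq : gridLen A i x = volume ((fun t : ℝ => update x i t) ⁻¹' A) := by
      rw [← lintegral_indicator_one hS.measurableSet]; rfl
    rw [heq]
    refine ⟨(hS.measure_pos volume ⟨x i, by simpa using hx⟩).ne', ?_⟩
    refine (Bornology.IsBounded.measure_lt_top ?_).ne
    refine (isBounded_closedBall (x := x i) (r := diam A)).subset fun t ht => ?_
    have h1 := dist_le_diam_of_mem hb ht hx
    have h2 := dist_le_pi_dist (update x i t) x i
    rw [update_self] at h2
    exact h2.trans h1
  -- Hölder exponents: `k * θ` for the grid-lines factor and `θ` for each of the `k + 1` others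
  set θ : ℝ := 1 / (2 * k + 1) with hθ
  have hgrid := lintegral_mul_prod_lintegral_pow_le (fun _ : Fin (k + 1) => (volume : Measure ℝ))
    (p := 1 / k) (by positivity) (by simp [hkR.ne'])
    (f := A.indicator 1) (measurable_one.indicator hA.measurableSet)
  have hmeas := fun i => measurable_gridLen hA.measurableSet i
  have hG : ∫⁻ x in A, ∏ i, gridLen A i x ^ ((1 : ℝ) / k) ≤ volume A ^ (1 + (1 : ℝ) / k) := by
    have h1 : ∫⁻ x : Fin (k + 1) → ℝ, A.indicator (1 : (Fin (k + 1) → ℝ) → ℝ≥0∞) x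
        ∂(Measure.pi fun _ => volume) = volume A := by
      rw [lintegral_indicator_one hA.measurableSet]; rfl
    rw [h1] at hgrid
    refine le_trans ?_ hgrid
    refine le_trans (setLIntegral_le_lintegral _ _) (le_of_eq ?_)
    rw [volume_pi]
    refine lintegral_congr fun x => ?_
    have : (1 - ((Fintype.card (Fin (k + 1)) : ℝ) - 1) * (1 / k)) = 0 := by
      simp [hkR.ne']
    rw [this, ENNReal.rpow_zero, one_mul]
    rfl
  have hH := ENNReal.lintegral_mul_prod_norm_pow_le (μ := volume.restrict A)
    (Finset.univ : Finset (Fin (k + 1)))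
    (g := fun x => ∏ i, gridLen A i x ^ ((1 : ℝ) / k)) (f := fun i x => (gridLen A i x)⁻¹)
    (Finset.measurable_prod _ fun i _ => (hmeas i).pow_const _).aemeasurable
    (fun i _ => (hmeas i).inv.aemeasurable) (k * θ) (p := fun _ => θ)
    (by simp [hθ]; field_simp; ring) (by positivity) (fun _ _ => by positivity)
  have hone : volume A = ∫⁻ x in A, (∏ i, gridLen A i x ^ ((1 : ℝ) / k)) ^ (k * θ)
      * ∏ i, (gridLen A i x)⁻¹ ^ θ := by
    rw [← setLIntegral_one]
    refine setLIntegral_congr_fun hA.measurableSet fun x hx => ?_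
    rw [← ENNReal.prod_rpow_of_nonneg (by positivity), ← Finset.prod_mul_distrib]
    symm
    refine Finset.prod_eq_one fun i _ => ?_
    obtain ⟨h0, ht⟩ := hpos i x hx
    rw [← ENNReal.rpow_mul, show (1 : ℝ) / k * (k * θ) = θ by field_simp,
      ← ENNReal.mul_rpow_of_nonneg _ _ (by positivity), ENNReal.mul_inv_cancel h0 ht,
      ENNReal.one_rpow]
  rw [← hone] at hH
  set W := fun i : Fin (k + 1) => volume ((fun x : Fin (k + 1) → ℝ => i.removeNth x) '' A) with hW
  have hmain : volume A ≤ (volume A ^ (k + 1) * ∏ i, W i) ^ θ := by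
    calc volume A ≤ _ := hH
      _ ≤ (volume A ^ (1 + (1 : ℝ) / k)) ^ (k * θ) * ∏ i, W i ^ θ := by
          gcongr with i _
          exact lintegral_gridLen_inv_le hA.measurableSet i
      _ = _ := by
          rw [ENNReal.mul_rpow_of_nonneg _ _ (by positivity), ENNReal.prod_rpow_of_nonneg
            (by positivity), ← ENNReal.rpow_natCast, ← ENNReal.rpow_mul, ← ENNReal.rpow_mul]
          congr 2
          push_cast; field_simp
  have h2 : volume A ^ (2 * k + 1) ≤ volume A ^ (k + 1) * ∏ i, W i := by
    calc volume A ^ (2 * k + 1) ≤ ((volume A ^ (k + 1) * ∏ i, W i) ^ θ) ^ (2 * k + 1) := by gcongr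
      _ = _ := by
        rw [← ENNReal.rpow_natCast, ← ENNReal.rpow_mul, hθ]
        push_cast
        rw [one_div_mul_cancel (by positivity), ENNReal.rpow_one]
  have h3 : volume A ^ (2 * k + 1) = volume A ^ (k + 1) * volume A ^ k := by ring
  rw [h3] at h2
  exact (ENNReal.mul_le_mul_iff_right (pow_ne_zero _ hV0) (ENNReal.pow_ne_top hVt)).1 h2
end LW

/-! ### Normalising constants of Hausdorff measures -/

section Const
open Metric Set Module
open scoped ENNReal

/-- The constant `a` with `volume = a • μH[k]` on `k`-dimensional Euclidean space. -/
noncomputable def volFactor (k : ℕ) : NNReal :=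
  Measure.addHaarScalarFactor (volume : Measure (EuclideanSpace ℝ (Fin k))) μH[k]

theorem volFactor_ne_zero (k : ℕ) : volFactor k ≠ 0 :=
  Measure.addHaarScalarFactor_volume_hausdorffMeasure_ne_zero k

theorem volume_eq_volFactor (k : ℕ) (s : Set (EuclideanSpace ℝ (Fin k))) :
    volume s = volFactor k * μH[k] s := by
  rw [← EuclideanSpace.euclideanHausdorffMeasure_eq_volume,
    Measure.euclideanHausdorffMeasure_def, Measure.smul_apply, ENNReal.smul_def, smul_eq_mul]
  rfl

theorem volume_le_ediam {k : ℕ} (hk : k ≠ 0) (s : Set (EuclideanSpace ℝ (Fin k))) :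
    volume s ≤ volFactor k * ediam s ^ k := by
  have : Nonempty (Fin k) := ⟨⟨0, Nat.pos_of_ne_zero hk⟩⟩
  have h := hausdorff_le_ediam s
  rw [finrank_euclideanSpace_fin] at h
  rw [volume_eq_volFactor]
  gcongr

/-- A dimension-raising step: the projections of a set of given diameter to the coordinate
hyperplanes have at most that diameter, so `volume_le_ediam` in dimension `k` and the Loomis–Whitney
inequality give a bound in dimension `k + 1`. -/
theorem volume_pow_le_ediam {k : ℕ} (hk : k ≠ 0) (s : Set (EuclideanSpace ℝ (Fin (k + 1)))) :
    volume s ^ k ≤ (volFactor k * ediam s ^ k) ^ (k + 1) := by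
  by_cases hb : ediam s = ⊤
  · rw [hb, ENNReal.top_pow hk, ENNReal.mul_top (by simpa using volFactor_ne_zero k),
      ENNReal.top_pow (by simp)]
    exact le_top
  -- replace `s` by an open set of the same diameter and at least the same volume
  set K := convexHull ℝ s with hKdef
  have hK : Convex ℝ K := convex_convexHull ℝ s
  have hKd : ediam (interior K) ≤ ediam s := by
    rw [← convexHull_ediam s]; exact ediam_mono interior_subset
  have hsK : volume s ≤ volume (interior K) := by
    have h1 : s ⊆ frontier K ∪ interior K := by
      rw [frontier, sdiff_union_of_subset interior_subset_closure]
      exact (subset_convexHull ℝ s).trans subset_closure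
    refine (measure_mono h1).trans ((measure_union_le _ _).trans ?_)
    rw [hK.addHaar_frontier volume, zero_add]
  set A : Set (Fin (k + 1) → ℝ) := (WithLp.toLp 2) ⁻¹' (interior K) with hA
  have hAvol : volume A = volume (interior K) :=
    (PiLp.volume_preserving_toLp (Fin (k + 1))).measure_preimage
      isOpen_interior.measurableSet.nullMeasurableSet
  have hAo : IsOpen A := isOpen_interior.preimage (PiLp.continuous_toLp 2 _)
  have hAb : Bornology.IsBounded A := by
    have h2 : Bornology.IsBounded (interior K) := isBounded_iff_ediam_ne_top.2
      (ne_top_of_le_ne_top hb hKd)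
    have h3 : A = WithLp.ofLp '' (interior K) := by
      ext x; constructor
      · intro hx; exact ⟨_, hx, rfl⟩
      · rintro ⟨y, hy, rfl⟩; exact hy
    rw [h3]
    exact (PiLp.lipschitzWith_ofLp 2 _).isBounded_image h2
  have hproj : ∀ i : Fin (k + 1), volume ((fun x : Fin (k + 1) → ℝ => i.removeNth x) '' A)
      ≤ volFactor k * ediam s ^ k := by
    intro i
    set S := (fun x : Fin (k + 1) → ℝ => i.removeNth x) '' A with hS
    have h1 : volume S = volume (WithLp.ofLp ⁻¹' S : Set (EuclideanSpace ℝ (Fin k))) :=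
      ((EuclideanSpace.volume_preserving_symm_measurableEquiv_toLp
        (Fin k)).measure_preimage_equiv S).symm
    rw [h1]
    refine (volume_le_ediam hk _).trans ?_
    gcongr
    refine le_trans ?_ hKd
    refine ediam_le fun x hx y hy => ?_
    obtain ⟨x', hx', hxe⟩ := hx
    obtain ⟨y', hy', hye⟩ := hy
    refine le_trans ?_ (edist_le_ediam_of_mem hx' hy')
    rw [edist_dist, edist_dist]
    refine ENNReal.ofReal_le_ofReal ?_
    rw [EuclideanSpace.dist_eq, EuclideanSpace.dist_eq]
    refine Real.sqrt_le_sqrt ?_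
    rw [Fin.sum_univ_succAbove _ i]
    have hx2 : ∀ j, x.ofLp j = x' (i.succAbove j) := fun j => (congrFun hxe j).symm
    have hy2 : ∀ j, y.ofLp j = y' (i.succAbove j) := fun j => (congrFun hye j).symm
    simp only [hx2, hy2]
    exact le_add_of_nonneg_left (by positivity)
  calc volume s ^ k ≤ volume A ^ k := by rw [hAvol]; gcongr
    _ ≤ _ := loomis_whitney hk hAo hAb
    _ ≤ ∏ i : Fin (k + 1), (volFactor k * ediam s ^ k : ℝ≥0∞) :=
        Finset.prod_le_prod' fun i _ => hproj i
    _ = _ := by simp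

/-- Comparison of the normalising constants in consecutive dimensions. -/
theorem volFactor_pow_le {k : ℕ} (hk : k ≠ 0) :
    volFactor (k + 1) ^ k ≤ volFactor k ^ (k + 1) := by
  have hkR : (k : ℝ) ≠ 0 := by exact_mod_cast hk
  set κ : NNReal := volFactor k ^ (((k : ℝ) + 1) / k) with hκ
  have hκ0 : κ ≠ 0 := by
    simp [hκ, NNReal.rpow_eq_zero_iff, volFactor_ne_zero]
  have hκk : κ ^ k = volFactor k ^ (k + 1) := by
    rw [hκ, ← NNReal.rpow_natCast, ← NNReal.rpow_mul, div_mul_cancel₀ _ hkR]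
    exact_mod_cast NNReal.rpow_natCast _ (k + 1)
  have hle : ∀ s : Set (EuclideanSpace ℝ (Fin (k + 1))),
      volume s ≤ κ * ediam s ^ (k + 1) := by
    intro s
    have h := volume_pow_le_ediam hk s
    have h2 : ((volFactor k : ℝ≥0∞) * ediam s ^ k) ^ (k + 1) = (κ * ediam s ^ (k + 1)) ^ k := by
      rw [mul_pow, mul_pow, ← ENNReal.coe_pow, ← ENNReal.coe_pow, hκk, ← pow_mul, ← pow_mul,
        mul_comm k]
    rw [h2] at h
    exact (ENNReal.pow_le_pow_left_iff hk).1 h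
  -- a measure dominated by the power of the diameter is dominated by the Hausdorff measure
  have hm : (κ⁻¹ : NNReal) • (volume : Measure (EuclideanSpace ℝ (Fin (k + 1))))
      ≤ μH[((k + 1 : ℕ) : ℝ)] := by
    refine Measure.le_hausdorffMeasure _ _ 1 one_pos fun s _ => ?_
    rw [Measure.smul_apply, ENNReal.smul_def, smul_eq_mul, ENNReal.rpow_natCast,
      ENNReal.coe_inv hκ0, mul_comm, ← div_eq_mul_inv]
    refine ENNReal.div_le_of_le_mul ?_
    rw [mul_comm]; exact hle s
  set U : Set (EuclideanSpace ℝ (Fin (k + 1))) := ball 0 1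
  have h1 := hm U
  rw [Measure.smul_apply, volume_eq_volFactor, ENNReal.smul_def, smul_eq_mul, ← mul_assoc] at h1
  have hU0 : μH[((k + 1 : ℕ) : ℝ)] U ≠ 0 := (measure_ball_pos _ 0 one_pos).ne'
  have hUt : μH[((k + 1 : ℕ) : ℝ)] U ≠ ⊤ := measure_ball_lt_top.ne
  have h3 : (κ⁻¹ : NNReal) * (volFactor (k + 1) : ℝ≥0∞) ≤ 1 := by
    refine (ENNReal.mul_le_mul_iff_left hU0 hUt).1 ?_
    rwa [one_mul]
  have h4 : κ⁻¹ * volFactor (k + 1) ≤ 1 := by exact_mod_cast h3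
  have h5 : volFactor (k + 1) ≤ κ := by
    rwa [inv_mul_le_iff₀ (pos_iff_ne_zero.2 hκ0), mul_one] at h4
  rw [← hκk]
  gcongr
end Const

/-! ### Cones and prisms -/

section Cone
open Metric Set Module
open scoped ENNReal Pointwise

theorem mem_slice_iff {V : Type*} [NormedAddCommGroup V] [InnerProductSpace ℝ V] (v y : V) (t : ℝ) :
    y ∈ AffineSubspace.mk' (t • v +ᵥ (0 : V)) (Submodule.span ℝ {v})ᗮ
      ↔ inner ℝ v y = t * ‖v‖ ^ 2 := by
  rw [AffineSubspace.mem_mk', Submodule.mem_orthogonal_singleton_iff_inner_right]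
  simp only [vadd_eq_add, add_zero, vsub_eq_sub, inner_sub_right, inner_smul_right,
    real_inner_self_eq_norm_sq]
  exact sub_eq_zero

theorem lintegral_pow_Ioo (d : ℕ) (hd : d ≠ 0) :
    ∫⁻ t in Ioo (0 : ℝ) 1, ENNReal.ofReal (t ^ (d - 1)) = ENNReal.ofReal (1 / d) := by
  obtain ⟨m, rfl⟩ := Nat.exists_eq_succ_of_ne_zero hd
  rw [← ofReal_integral_eq_lintegral_ofReal]
  · rw [← integral_Ioc_eq_integral_Ioo, ← intervalIntegral.integral_of_le zero_le_one]
    simp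
  · exact (((continuous_pow _).integrableOn_Icc (a := (0:ℝ)) (b := 1)).mono_set Ioo_subset_Icc_self)
  · refine (ae_restrict_iff' measurableSet_Ioo).2 (Eventually.of_forall fun t ht => ?_)
    exact pow_nonneg ht.1.le _

variable {V : Type*} [NormedAddCommGroup V] [InnerProductSpace ℝ V] [MeasurableSpace V]
  [BorelSpace V] [FiniteDimensional ℝ V]

/-- Volume of the cone with apex `0` over a set `F` in the hyperplane through `v` orthogonal to `v`,
by slicing. -/
theorem cone_volume_le {v : V} (hv : v ≠ 0) {F C : Set V} (hF : ∀ y ∈ F, inner ℝ v y = ‖v‖ ^ 2)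
    (hC : MeasurableSet C) (hFC : ∀ y ∈ F, ∀ t : ℝ, 0 < t → t < 1 → t • y ∈ C) :
    ENNReal.ofReal (‖v‖ / finrank ℝ V) * μHE[finrank ℝ V - 1] F ≤ volume C := by
  have hd : finrank ℝ V ≠ 0 := by
    have : Nontrivial V := ⟨v, 0, hv⟩
    exact finrank_pos.ne'
  rw [← InnerProductSpace.euclideanHausdorffMeasure_eq_volume,
    EuclideanGeometry.euclideanHausdorffMeasure_eq_lintegral (0 : V) hv hC]
  set d := finrank ℝ V
  calc ENNReal.ofReal (‖v‖ / d) * μHE[d - 1] F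
      = ‖v‖ₑ * ∫⁻ t in Ioo (0 : ℝ) 1, ENNReal.ofReal (t ^ (d - 1)) * μHE[d - 1] F := by
        rw [lintegral_mul_const _ (by fun_prop), lintegral_pow_Ioo d hd, ← mul_assoc,
          ← ofReal_norm, ← ENNReal.ofReal_mul (norm_nonneg _), mul_one_div]
    _ ≤ ‖v‖ₑ * ∫⁻ t in Ioo (0 : ℝ) 1, μHE[d - 1]
          (C ∩ AffineSubspace.mk' (t • v +ᵥ (0 : V)) (Submodule.span ℝ {v})ᗮ) := by
        refine mul_le_mul' le_rfl ?_
        refine setLIntegral_mono' measurableSet_Ioo fun t ht => ?_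
        have h1 := Measure.euclideanHausdorffMeasure_smul₀ (d - 1) ht.1.ne' F
        have h2 : ENNReal.ofReal (t ^ (d - 1)) * μHE[d - 1] F = μHE[d - 1] (t • F) := by
          rw [h1, ENNReal.smul_def, smul_eq_mul, ENNReal.coe_pow, ← enorm_eq_nnnorm,
            Real.enorm_eq_ofReal ht.1.le, ENNReal.ofReal_pow ht.1.le]
        rw [h2]
        refine measure_mono ?_
        rintro _ ⟨y, hy, rfl⟩
        refine ⟨hFC y hy t ht.1 ht.2, ?_⟩
        rw [SetLike.mem_coe, mem_slice_iff, inner_smul_right, hF y hy]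
    _ ≤ _ := by
        refine mul_le_mul' le_rfl ?_
        exact setLIntegral_le_lintegral _ _

/-- Volume of a prism of height `‖v‖` over a set `F` orthogonal to `v`, by slicing. -/
theorem prism_volume_le {v : V} (hv : v ≠ 0) {F C : Set V} (hF : ∀ y ∈ F, inner ℝ v y = 0)
    (hC : MeasurableSet C) (hFC : ∀ y ∈ F, ∀ t : ℝ, 0 < t → t < 1 → t • v + y ∈ C) :
    ‖v‖ₑ * μHE[finrank ℝ V - 1] F ≤ volume C := by
  rw [← InnerProductSpace.euclideanHausdorffMeasure_eq_volume,
    EuclideanGeometry.euclideanHausdorffMeasure_eq_lintegral (0 : V) hv hC]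
  set d := finrank ℝ V
  calc ‖v‖ₑ * μHE[d - 1] F
      = ‖v‖ₑ * ∫⁻ t in Ioo (0 : ℝ) 1, μHE[d - 1] F := by
        simp
    _ ≤ ‖v‖ₑ * ∫⁻ t in Ioo (0 : ℝ) 1, μHE[d - 1]
          (C ∩ AffineSubspace.mk' (t • v +ᵥ (0 : V)) (Submodule.span ℝ {v})ᗮ) := by
        refine mul_le_mul' le_rfl ?_
        refine setLIntegral_mono' measurableSet_Ioo fun t ht => ?_
        rw [← measure_vadd μHE[d - 1] (t • v) F]
        refine measure_mono ?_
        rintro _ ⟨y, hy, rfl⟩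
        refine ⟨hFC y hy t ht.1 ht.2, ?_⟩
        rw [SetLike.mem_coe, mem_slice_iff]
        simp [inner_add_right, inner_smul_right, hF y hy]
    _ ≤ _ := by
        refine mul_le_mul' le_rfl ?_
        exact setLIntegral_le_lintegral _ _

/-- The cones with apex `0` over the facets `{x ∈ P | ⟪g i, x⟫ = h}` have heights `h / ρ`, lie
in `P` and overlap only in null sets, so their volumes add up to at most the volume of `P`. -/
theorem facets_volume_le {ι : Type*} [Fintype ι] (g : ι → V) (hg : Function.Injective g)
    {ρ h : ℝ} (hρ : 0 < ρ) (hgn : ∀ i, ‖g i‖ = ρ) (hh : 0 < h) {P : Set V} (hP : IsCompact P)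
    (hstar : ∀ x ∈ P, ∀ t : ℝ, 0 ≤ t → t ≤ 1 → t • x ∈ P)
    (hle : ∀ i, ∀ x ∈ P, inner ℝ (g i) x ≤ h) :
    ∑ i, ENNReal.ofReal (h / (ρ * finrank ℝ V)) *
      μHE[finrank ℝ V - 1] {x ∈ P | inner ℝ (g i) x = h} ≤ volume P := by
  set F : ι → Set V := fun i => {x ∈ P | inner ℝ (g i) x = h} with hFdef
  set C : ι → Set V := fun i => (fun p : ℝ × V => p.1 • p.2) '' (Icc (0 : ℝ) 1 ×ˢ F i) with hCdef
  have hFc : ∀ i, IsCompact (F i) := fun i =>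
    hP.inter_right (isClosed_eq (by fun_prop) continuous_const)
  have hCc : ∀ i, IsCompact (C i) := fun i =>
    (isCompact_Icc.prod (hFc i)).image (by fun_prop)
  have hcone : ∀ i, ENNReal.ofReal (h / (ρ * finrank ℝ V)) * μHE[finrank ℝ V - 1] (F i)
      ≤ volume (C i) := by
    intro i
    have hgi : g i ≠ 0 := by
      rw [← norm_ne_zero_iff, hgn i]; exact hρ.ne'
    have hvn : ‖(h / ρ ^ 2) • g i‖ = h / ρ := by
      rw [norm_smul, hgn, Real.norm_of_nonneg (by positivity)]; field_simp
    have := cone_volume_le (v := (h / ρ ^ 2) • g i) (smul_ne_zero (by positivity) hgi)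
      (F := F i) (C := C i) ?_ (hCc i).measurableSet ?_
    · rwa [hvn, div_div] at this
    · intro y hy
      rw [hvn, inner_smul_left, hy.2]
      simp only [conj_trivial]
      field_simp
    · intro y hy t h0 h1
      exact ⟨(t, y), ⟨⟨h0.le, h1.le⟩, hy⟩, rfl⟩
  have hdisj : Pairwise (Function.onFun (AEDisjoint (volume : Measure V)) C) := by
    intro i j hij
    -- two cones can only meet in the hyperplane where both functionals agree
    have hsub : C i ∩ C j ⊆ ((Submodule.span ℝ {g i - g j})ᗮ : Submodule ℝ V) := by
      rintro _ ⟨⟨⟨t, y⟩, ⟨⟨ht0, ht1⟩, hyP, hy⟩, rfl⟩, ⟨⟨t', y'⟩, ⟨⟨ht0', ht1'⟩, hyP', hy'⟩, heq⟩⟩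
      simp only at ht0 ht1 ht0' ht1' heq hy hy' hyP hyP'
      rw [SetLike.mem_coe, Submodule.mem_orthogonal_singleton_iff_inner_right, inner_sub_left]
      have e1 : inner ℝ (g i) (t • y) = t * h := by rw [inner_smul_right, hy]
      have e2 : inner ℝ (g j) (t • y) = t' * h := by rw [← heq, inner_smul_right, hy']
      have e3 : inner ℝ (g j) (t • y) ≤ t * h := by
        rw [inner_smul_right]; exact mul_le_mul_of_nonneg_left (hle j y hyP) ht0
      have e4 : inner ℝ (g i) (t • y) ≤ t' * h := by
        rw [← heq, inner_smul_right]; exact mul_le_mul_of_nonneg_left (hle i y' hyP') ht0'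
      simp only
      linarith
    refine measure_mono_null hsub (Measure.addHaar_submodule _ _ ?_)
    intro htop
    rw [Submodule.orthogonal_eq_top_iff, Submodule.span_singleton_eq_bot, sub_eq_zero] at htop
    exact hij (hg htop)
  calc _ ≤ ∑ i, volume (C i) := Finset.sum_le_sum fun i _ => hcone i
    _ = volume (⋃ i, C i) := by
        rw [measure_iUnion₀ hdisj (fun i => (hCc i).measurableSet.nullMeasurableSet), tsum_fintype]
    _ ≤ volume P := by
        refine measure_mono (iUnion_subset fun i => ?_)
        rintro _ ⟨⟨t, y⟩, ⟨⟨ht0, ht1⟩, hyP, hy⟩, rfl⟩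
        exact hstar y hyP t ht0 ht1
end Cone

/-! ### Bounds for functions with bounded hessians -/

section Bounds

/-- A periodic sequence whose second differences are bounded below has bounded first differences:
along a period these sum to zero and decrease by at most `M` at each step. -/
theorem cycle_diff_bound {f : ℕ → ℝ} {n : ℕ} (hn : n ≠ 0) {M : ℝ} (hM : 0 ≤ M)
    (hper : ∀ j, f (j + n) = f j) (hf : ∀ j, 2 * f (j + 1) - f (j + 2) - f j ≤ M) (j : ℕ) :
    |f (j + 1) - f j| ≤ n * M := by
  have hstep : ∀ k i, f (i + 1) - f i ≤ f (i + k + 1) - f (i + k) + k * M := by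
    intro k
    induction k with
    | zero => intro i; simp
    | succ k ih =>
      intro i
      have h1 := ih i
      have h2 := hf (i + k)
      push_cast
      rw [show i + (k + 1) + 1 = i + k + 2 by ring, show i + (k + 1) = i + k + 1 by ring]
      linarith
  have hsum : ∑ k ∈ Finset.range n, (f (j + k + 1) - f (j + k)) = 0 := by
    have := Finset.sum_range_sub (fun k => f (j + k)) n
    simp only [add_zero, hper, sub_self] at this
    rw [← this]
    rfl
  have hnpos : (0 : ℝ) < n := by exact_mod_cast Nat.pos_of_ne_zero hn
  rw [abs_le]
  constructor
  · have h : ∑ k ∈ Finset.range n, (f (j + k + 1) - f (j + k))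
        ≤ ∑ k ∈ Finset.range n, (f (j + 1) - f j + n * M) := by
      refine Finset.sum_le_sum fun k hk => ?_
      have hk' : k < n := Finset.mem_range.1 hk
      have h1 := hstep (n - k) (j + k)
      rw [show j + k + (n - k) + 1 = j + 1 + n by omega, show j + k + (n - k) = j + n by omega,
        hper, hper] at h1
      have h2 : ((n - k : ℕ) : ℝ) * M ≤ n * M := by
        gcongr; omega
      linarith
    rw [hsum, Finset.sum_const, Finset.card_range, nsmul_eq_mul] at h
    have := nonneg_of_mul_nonneg_right h hnpos
    linarith
  · have h : ∑ k ∈ Finset.range n, (f (j + 1) - f j - n * M)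
        ≤ ∑ k ∈ Finset.range n, (f (j + k + 1) - f (j + k)) := by
      refine Finset.sum_le_sum fun k hk => ?_
      have hk' : k < n := Finset.mem_range.1 hk
      have h1 := hstep k j
      have h2 : (k : ℝ) * M ≤ n * M := by
        gcongr
      linarith
    rw [hsum, Finset.sum_const, Finset.card_range, nsmul_eq_mul] at h
    by_contra hc
    push Not at hc
    have : 0 < (n : ℝ) * (f (j + 1) - f j - n * M) := mul_pos hnpos (by linarith)
    linarith

theorem cycle_bound {f : ℕ → ℝ} {n : ℕ} (hn : n ≠ 0) {M : ℝ} (hM : 0 ≤ M)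
    (hper : ∀ j, f (j + n) = f j) (hf : ∀ j, 2 * f (j + 1) - f (j + 2) - f j ≤ M) (k : ℕ)
    (hk : k ≤ n) : |f k - f 0| ≤ n * (n * M) := by
  have h : ∀ k : ℕ, |f k - f 0| ≤ k * (n * M) := by
    intro k
    induction k with
    | zero => simp
    | succ k ih =>
      have h1 := cycle_diff_bound hn hM hper hf k
      calc |f (k + 1) - f 0| = |(f (k + 1) - f k) + (f k - f 0)| := by ring_nf
        _ ≤ |f (k + 1) - f k| + |f k - f 0| := abs_add_le _ _
        _ ≤ n * M + k * (n * M) := add_le_add h1 ih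
        _ = _ := by push_cast; ring
  refine (h k).trans ?_
  gcongr

variable {n : ℕ}

/-- Two adjacent rhombi add up to a second difference along a lattice direction. -/
theorem second_diff_fst (x : ZMod n × ZMod n → ℝ) (p : ZMod n × ZMod n) :
    2 * x (p + (1, 0)) - x (p + (1, 0) + (1, 0)) - x p
      = hess n 1 x (p + (1, 0) + (1, 0)) + hess n 0 x p := by
  obtain ⟨a, b⟩ := p
  simp only [hess, Prod.mk_add_mk]
  ring_nf
  simp
  ring_nf

theorem second_diff_snd (x : ZMod n × ZMod n → ℝ) (p : ZMod n × ZMod n) :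
    2 * x (p + (0, 1)) - x (p + (0, 1) + (0, 1)) - x p
      = hess n 2 x (p + (0, 1) + (0, 1)) + hess n 1 x p := by
  obtain ⟨a, b⟩ := p
  simp only [hess, Prod.mk_add_mk]
  ring_nf
  simp
  ring_nf

variable [NeZero n]

theorem line_bound (x : ZMod n × ZMod n → ℝ) (e : ZMod n × ZMod n) {M : ℝ} (hM : 0 ≤ M)
    (hx : ∀ p, 2 * x (p + e) - x (p + e + e) - x p ≤ M) (p : ZMod n × ZMod n) (k : ℕ)
    (hk : k ≤ n) : |x (p + k • e) - x p| ≤ n * (n * M) := by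
  have hne : n • e = 0 := by
    ext <;> simp
  have := cycle_bound (f := fun j => x (p + j • e)) (NeZero.ne n) hM ?_ ?_ k hk
  · simpa using this
  · intro j
    simp only [add_smul, hne, add_zero]
  · intro j
    have := hx (p + j • e)
    simp only [add_smul, one_smul, two_smul, ← add_assoc]
    exact this

/-- A function with bounded hessians has bounded oscillation: its second differences along the
two coordinate directions are bounded on one side, and it is periodic. -/
theorem osc_bound {s : Fin 3 → ℝ} {S : ℝ} (hS : ∀ r, s r ≤ S) (hS0 : 0 ≤ S)
    {x : ZMod n × ZMod n → ℝ} (hx : ∀ r v, hess n r x v ≤ s r) (p q : ZMod n × ZMod n) :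
    |x q - x p| ≤ 4 * n ^ 2 * S := by
  have h1 := line_bound x (1, 0) (M := 2 * S) (by linarith) (fun p => by
    rw [second_diff_fst]; linarith [hx 1 (p + (1, 0) + (1, 0)), hx 0 p, hS 0, hS 1])
    p (q.1 - p.1).val (ZMod.val_lt _).le
  have h2 := line_bound x (0, 1) (M := 2 * S) (by linarith) (fun p => by
    rw [second_diff_snd]; linarith [hx 2 (p + (0, 1) + (0, 1)), hx 1 p, hS 2, hS 1])
    (p + (q.1 - p.1).val • (1, 0)) (q.2 - p.2).val (ZMod.val_lt _).le
  have hq : p + (q.1 - p.1).val • (1, 0) + (q.2 - p.2).val • (0, 1) = q := by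
    ext <;> simp
  rw [hq] at h2
  calc |x q - x p| = |(x q - x (p + (q.1 - p.1).val • (1, 0)))
        + (x (p + (q.1 - p.1).val • (1, 0)) - x p)| := by ring_nf
    _ ≤ _ := abs_add_le _ _
    _ ≤ _ := add_le_add h2 h1
    _ = _ := by ring

theorem abs_bound {s : Fin 3 → ℝ} {S : ℝ} (hS : ∀ r, s r ≤ S) (hS0 : 0 ≤ S)
    {x : ZMod n × ZMod n → ℝ} (hx : ∀ r v, hess n r x v ≤ s r) (h0 : 0 ≤ ∑ v, x v)
    (h1 : ∑ v, x v ≤ n) (q : ZMod n × ZMod n) : |x q| ≤ 4 * n ^ 2 * S + 1 := by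
  have hc : ∑ _p : ZMod n × ZMod n, x q = (n : ℝ) ^ 2 * x q := by
    simp [ZMod.card, sq]
  have hn : (1 : ℝ) ≤ n := by exact_mod_cast NeZero.one_le
  have hB : ∑ _p : ZMod n × ZMod n, (4 * n ^ 2 * S : ℝ) = (n : ℝ) ^ 2 * (4 * n ^ 2 * S) := by
    simp [ZMod.card, sq]
  have hu : ∑ p : ZMod n × ZMod n, (x q - x p) ≤ ∑ _p : ZMod n × ZMod n, (4 * n ^ 2 * S : ℝ) :=
    Finset.sum_le_sum fun p _ => (abs_le.1 (osc_bound hS hS0 hx p q)).2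
  have hl : ∑ p : ZMod n × ZMod n, (x p - x q) ≤ ∑ _p : ZMod n × ZMod n, (4 * n ^ 2 * S : ℝ) :=
    Finset.sum_le_sum fun p _ => (abs_le.1 (osc_bound hS hS0 hx q p)).2
  rw [Finset.sum_sub_distrib, hc, hB] at hu hl
  have hn2 : (0 : ℝ) < (n : ℝ) ^ 2 := by positivity
  rw [abs_le]
  constructor
  · refine le_of_mul_le_mul_left ?_ hn2
    nlinarith
  · refine le_of_mul_le_mul_left ?_ hn2
    nlinarith

end Bounds

/-! ### Volume of the slab over the polytope -/

section Twist
open Set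

/-- Volume of the product of a box and a simplex, bounded by Chernoff's method: on the set, the
indicator is at most `exp N` times a product of one-variable functions, exponentials
`exp (-(y + σ) / σ)` in the simplex directions. -/
theorem box_simplex_volume_le {ι : Type*} [Fintype ι] [DecidableEq ι] (I : Finset ι) {R σ N : ℝ}
    (hR : 0 ≤ R) (hσ : 0 < σ) :
    volume {Y : ι → ℝ | (∀ p ∉ I, |Y p| ≤ R) ∧ (∀ p ∈ I, -σ ≤ Y p) ∧ ∑ p ∈ I, (Y p + σ) ≤ N * σ}
      ≤ ENNReal.ofReal (Real.exp N * ((2 * R) ^ (Fintype.card ι - I.card) * σ ^ I.card)) := by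
  set ψ : ι → ℝ → ℝ := fun p => if p ∈ I then
      (Ici (-σ)).indicator (fun y => Real.exp (-1) * Real.exp ((-1 / σ) * y))
    else (Icc (-R) R).indicator (fun _ => 1) with hψ
  have hint : ∀ p, Integrable (ψ p) := by
    intro p
    by_cases hp : p ∈ I
    · simp only [hψ, hp, if_true]
      rw [integrable_indicator_iff measurableSet_Ici, integrableOn_Ici_iff_integrableOn_Ioi]
      exact (integrableOn_exp_mul_Ioi (div_neg_of_neg_of_pos (by norm_num) hσ) _).const_mul _
    · simp only [hψ, hp, if_false]
      rw [integrable_indicator_iff measurableSet_Icc]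
      exact integrableOn_const (by simp)
  have hnn : ∀ p y, 0 ≤ ψ p y := by
    intro p y
    by_cases hp : p ∈ I
    · simp only [hψ, hp, if_true]
      exact indicator_nonneg (fun _ _ => by positivity) _
    · simp only [hψ, hp, if_false]
      exact indicator_nonneg (fun _ _ => by positivity) _
  have hval : ∀ p, ∫ y, ψ p y = if p ∈ I then σ else 2 * R := by
    intro p
    by_cases hp : p ∈ I
    · simp only [hψ, hp, if_true]
      rw [integral_indicator measurableSet_Ici, integral_const_mul, integral_Ici_eq_integral_Ioi,
        integral_exp_mul_Ioi (div_neg_of_neg_of_pos (by norm_num) hσ)]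
      have : Real.exp (-1) * Real.exp (-1 / σ * -σ) = 1 := by
        rw [← Real.exp_add]; field_simp; simp
      rw [← mul_div_assoc, mul_neg, this]
      field_simp
    · simp only [hψ, hp, if_false]
      rw [integral_indicator measurableSet_Icc]
      simp [hR]
      ring
  have hprod : Integrable (fun Y : ι → ℝ => ∏ p, ψ p (Y p)) := Integrable.fintype_prod hint
  have hle : volume {Y : ι → ℝ | (∀ p ∉ I, |Y p| ≤ R) ∧ (∀ p ∈ I, -σ ≤ Y p) ∧
        ∑ p ∈ I, (Y p + σ) ≤ N * σ}
      ≤ ∫⁻ Y : ι → ℝ, ENNReal.ofReal (Real.exp N * ∏ p, ψ p (Y p)) := by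
    refine meas_le_lintegral₀ (hprod.const_mul _).aestronglyMeasurable.aemeasurable.ennreal_ofReal ?_
    rintro Y ⟨h1, h2, h3⟩
    rw [ENNReal.one_le_ofReal]
    have e1 : ∏ p, ψ p (Y p) = ∏ p ∈ I, Real.exp (-(Y p + σ) / σ) := by
      rw [← Finset.prod_subset (Finset.subset_univ I)]
      · refine Finset.prod_congr rfl fun p hp => ?_
        simp only [hψ, hp, if_true]
        rw [indicator_of_mem (mem_Ici.2 (h2 p hp)), ← Real.exp_add]
        congr 1
        field_simp
        ring
      · intro p _ hp
        simp only [hψ, hp, if_false]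
        exact indicator_of_mem (mem_Icc.2 (abs_le.1 (h1 p hp))) _
    rw [e1, ← Real.exp_sum, ← Real.exp_add, Real.one_le_exp_iff, ← Finset.sum_div,
      Finset.sum_neg_distrib, neg_div, ← sub_eq_add_neg, sub_nonneg, div_le_iff₀ hσ]
    exact h3
  refine hle.trans ?_
  rw [← ofReal_integral_eq_lintegral_ofReal (hprod.const_mul _)
    (Eventually.of_forall fun Y => mul_nonneg (Real.exp_pos _).le
      (Finset.prod_nonneg fun p _ => hnn p _)), integral_const_mul,
    integral_fintype_prod_volume_eq_prod]
  simp only [hval]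
  rw [Finset.prod_ite, Finset.prod_const, Finset.prod_const, Finset.filter_mem_eq_inter,
    Finset.univ_inter, Finset.filter_not, Finset.filter_mem_eq_inter, Finset.univ_inter,
    ← Finset.compl_eq_univ_sdiff, Finset.card_compl, mul_comm (σ ^ _)]

/-- In the sheared coordinates `X (i, j) = x (i + j, j)`, the map taking `x` to the mixed second
differences of `X`, with the values of `X` kept on the two axes `i = 0` and `j = 0`.  Off the axes
its coordinates are the negatives of the hessians of class `0`. -/
def twist (n : ℕ) (A : Type*) [CommRing A] :
    (ZMod n × ZMod n → A) →ₗ[A] (ZMod n × ZMod n → A) where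
  toFun x p := if p.1 = 0 ∨ p.2 = 0 then x (p.1 + p.2, p.2) else
    x (p.1 + p.2, p.2) - x (p.1 - 1 + p.2, p.2) - x (p.1 + (p.2 - 1), p.2 - 1)
      + x (p.1 - 1 + (p.2 - 1), p.2 - 1)
  map_add' x y := by
    ext p
    by_cases h : p.1 = 0 ∨ p.2 = 0
    · simp [h]
    · simp [h]; ring
  map_smul' c x := by
    ext p
    by_cases h : p.1 = 0 ∨ p.2 = 0
    · simp [h]
    · simp [h]; ring

theorem twist_apply (n : ℕ) (A : Type*) [CommRing A] (x : ZMod n × ZMod n → A)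
    (p : ZMod n × ZMod n) : twist n A x p = if p.1 = 0 ∨ p.2 = 0 then x (p.1 + p.2, p.2) else
    x (p.1 + p.2, p.2) - x (p.1 - 1 + p.2, p.2) - x (p.1 + (p.2 - 1), p.2 - 1)
      + x (p.1 - 1 + (p.2 - 1), p.2 - 1) := rfl

theorem twist_apply_interior {n : ℕ} (x : ZMod n × ZMod n → ℝ) {p : ZMod n × ZMod n}
    (hp : ¬ (p.1 = 0 ∨ p.2 = 0)) :
    twist n ℝ x p = - hess n 0 x (p.1 - 1 + (p.2 - 1), p.2 - 1) := by
  rw [twist_apply, if_neg hp, hess]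
  simp only [if_true, Prod.mk_add_mk]
  ring_nf

variable {n : ℕ} [NeZero n]

theorem twist_injective (A : Type*) [CommRing A] : Function.Injective (twist n A) := by
  rw [← LinearMap.ker_eq_bot, LinearMap.ker_eq_bot']
  intro x hx
  have hx' : ∀ p, twist n A x p = 0 := fun p => by rw [hx]; rfl
  have key : ∀ a b : ℕ, x ((a : ZMod n) + b, b) = 0 := by
    intro a
    induction a with
    | zero =>
      intro b
      simpa [twist_apply] using hx' (0, b)
    | succ a iha =>
      intro b
      induction b with
      | zero => simpa [twist_apply] using hx' (((a + 1 : ℕ) : ZMod n), 0)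
      | succ b ihb =>
        have h := hx' (((a + 1 : ℕ) : ZMod n), ((b + 1 : ℕ) : ZMod n))
        rw [twist_apply] at h
        split_ifs at h with hc
        · exact h
        · have h1 := iha (b + 1)
          have h2 := iha b
          push_cast at h h1 h2 ihb ⊢
          simp only [add_sub_cancel_right] at h
          rw [h1, h2, ihb] at h
          simpa using h
  ext ⟨i, j⟩
  have := key (i - j).val j.val
  simpa using this

/-- The matrix of `twist` is integral and invertible, so its determinant is a nonzero integer. -/
theorem one_le_abs_det_twist : 1 ≤ |LinearMap.det (twist n ℝ)| := by
  have hne : LinearMap.det (twist n ℝ) ≠ 0 := by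
    rw [← isUnit_iff_ne_zero, ← LinearMap.isUnit_iff_isUnit_det, LinearMap.isUnit_iff_ker_eq_bot,
      LinearMap.ker_eq_bot]
    exact twist_injective ℝ
  have hmap : LinearMap.toMatrix' (twist n ℝ)
      = (LinearMap.toMatrix' (twist n ℤ)).map (Int.castRingHom ℝ) := by
    ext p q
    rw [Matrix.map_apply, LinearMap.toMatrix'_apply, LinearMap.toMatrix'_apply, twist_apply,
      twist_apply]
    simp only [Pi.single_apply]
    split_ifs <;> norm_num
  rw [← LinearMap.det_toMatrix', hmap, ← RingHom.mapMatrix_apply, ← RingHom.map_det] at hne ⊢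
  rw [eq_intCast, ← Int.cast_abs]
  rw [eq_intCast, Int.cast_ne_zero] at hne
  exact_mod_cast Int.one_le_abs hne

theorem sum_hess_zero (x : ZMod n × ZMod n → ℝ) : ∑ v, hess n 0 x v = 0 := by
  have h : ∀ c : ZMod n × ZMod n, ∑ v, x (v + c) = ∑ v, x v := fun c =>
    Equiv.sum_comp (Equiv.addRight c) x
  simp only [hess, if_true, Finset.sum_add_distrib, Finset.sum_sub_distrib, Finset.sum_neg_distrib,
    h]
  ring

/-- The vertices off the two axes. -/
def interiorV (n : ℕ) [NeZero n] : Finset (ZMod n × ZMod n) :=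
  Finset.univ.filter fun p => ¬ (p.1 = 0 ∨ p.2 = 0)

theorem card_interiorV : (interiorV n).card = (n - 1) ^ 2 := by
  have : interiorV n = (Finset.univ.erase 0) ×ˢ (Finset.univ.erase 0) := by
    ext p
    simp [interiorV]
  rw [this, Finset.card_product, Finset.card_erase_of_mem (Finset.mem_univ _), Finset.card_univ,
    ZMod.card, sq]

/-- The slab `{x | ∇²x ≼ s, 0 ≤ ∑ x ≤ n}` of height one over `P_n(s)`. -/
def slab (n : ℕ) [NeZero n] (s : Fin 3 → ℝ) : Set (ZMod n × ZMod n → ℝ) :=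
  {x | (∀ r v, hess n r x v ≤ s r) ∧ 0 ≤ ∑ v, x v ∧ ∑ v, x v ≤ n}

/-- The map `twist` does not decrease volume, and it sends the slab into a box times a simplex: the
numbers `s 0 - hess n 0 x v` are nonnegative and sum to `n² s 0`. -/
theorem slab_volume_le {s : Fin 3 → ℝ} (hs0 : 0 < s 0) {S : ℝ} (hS : ∀ r, s r ≤ S) :
    volume (slab n s) ≤ ENNReal.ofReal (Real.exp ((n : ℝ) ^ 2) *
      ((2 * (4 * n ^ 2 * S + 1)) ^ (n ^ 2 - (n - 1) ^ 2) * s 0 ^ (n - 1) ^ 2)) := by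
  have hS0 : 0 ≤ S := hs0.le.trans (hS 0)
  have hdet : volume (slab n s) ≤ volume (twist n ℝ '' slab n s) := by
    rw [Measure.addHaar_image_linearMap]
    refine le_mul_of_one_le_left zero_le ?_
    rw [ENNReal.one_le_ofReal]
    exact one_le_abs_det_twist
  have hbox := box_simplex_volume_le (interiorV n) (R := 4 * n ^ 2 * S + 1) (N := (n : ℝ) ^ 2)
    (by positivity) hs0
  rw [card_interiorV, Fintype.card_prod, ZMod.card, ← sq] at hbox
  refine hdet.trans (le_trans (measure_mono ?_) hbox)
  rintro _ ⟨x, ⟨hx, h0, h1⟩, rfl⟩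
  refine ⟨fun p hp => ?_, fun p hp => ?_, ?_⟩
  · have hp' : p.1 = 0 ∨ p.2 = 0 := by simpa [interiorV, or_iff_not_imp_left] using hp
    rw [twist_apply, if_pos hp']
    exact abs_bound hS hS0 hx h0 h1 _
  · rw [twist_apply_interior x (Finset.mem_filter.1 hp).2]
    exact neg_le_neg (hx 0 _)
  · have hinj : Function.Injective
        (fun p : ZMod n × ZMod n => (p.1 - 1 + (p.2 - 1), p.2 - 1)) := by
      rintro ⟨a, b⟩ ⟨c, d⟩ h
      simp only [Prod.mk.injEq, sub_left_inj] at h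
      obtain ⟨h1, rfl⟩ := h
      simpa using h1
    calc ∑ p ∈ interiorV n, (twist n ℝ x p + s 0)
        = ∑ p ∈ interiorV n, (s 0 - hess n 0 x (p.1 - 1 + (p.2 - 1), p.2 - 1)) := by
          refine Finset.sum_congr rfl fun p hp => ?_
          rw [twist_apply_interior x (Finset.mem_filter.1 hp).2]
          ring
      _ ≤ ∑ p : ZMod n × ZMod n, (s 0 - hess n 0 x (p.1 - 1 + (p.2 - 1), p.2 - 1)) :=
          Finset.sum_le_sum_of_subset_of_nonneg (Finset.subset_univ _)
            fun p _ _ => sub_nonneg.2 (hx 0 _)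
      _ = ∑ v, (s 0 - hess n 0 x v) :=
          (Finite.injective_iff_bijective.1 hinj).sum_comp (fun v => s 0 - hess n 0 x v)
      _ = (n : ℝ) ^ 2 * s 0 := by
          rw [Finset.sum_sub_distrib, sum_hess_zero]
          simp [ZMod.card, sq]

end Twist

/-! ### Facets and the polytope in Euclidean space -/

section Geometry
open Set Module
open scoped ENNReal

/-- The offset `b - a` of a rhombus `{a, b, c, d}` of class `r`. -/
def offB (n : ℕ) (r : Fin 3) : ZMod n × ZMod n :=
  if r = 0 then (1, 0) else if r = 1 then (0, 1) else (-1, -1)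

/-- The offset `c - a` of a rhombus `{a, b, c, d}` of class `r`. -/
def offC (n : ℕ) (r : Fin 3) : ZMod n × ZMod n :=
  if r = 0 then (2, 1) else if r = 1 then (-1, 1) else (-1, -2)

/-- The offset `d - a` of a rhombus `{a, b, c, d}` of class `r`. -/
def offD (n : ℕ) (r : Fin 3) : ZMod n × ZMod n :=
  if r = 0 then (1, 1) else if r = 1 then (-1, 0) else (0, -1)

theorem hess_eq (n : ℕ) (r : Fin 3) (x : ZMod n × ZMod n → ℝ) (v : ZMod n × ZMod n) :
    hess n r x v = -x v + x (v + offB n r) - x (v + offC n r) + x (v + offD n r) := by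
  fin_cases r <;> simp [hess, offB, offC, offD]

theorem off_distinct {n : ℕ} (hn : 3 ≤ n) (r : Fin 3) :
    offB n r ≠ 0 ∧ offC n r ≠ 0 ∧ offD n r ≠ 0 ∧ offB n r ≠ offC n r ∧ offB n r ≠ offD n r ∧
      offC n r ≠ offD n r ∧ offC n r + offC n r ≠ 0 := by
  have h1 : (1 : ZMod n) ≠ 0 := by
    have : Fact (1 < n) := ⟨by omega⟩
    exact one_ne_zero
  have h2 : (2 : ZMod n) ≠ 0 := by
    intro h
    have h' : ((2 : ℕ) : ZMod n) = 0 := by exact_mod_cast h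
    rw [ZMod.natCast_eq_zero_iff] at h'
    exact absurd (Nat.le_of_dvd (by norm_num) h') (by omega)
  have h3 : (1 : ZMod n) ≠ 2 := fun h => h1 (by linear_combination -h)
  have h4 : (1 : ZMod n) + 1 ≠ 0 := fun h => h2 (by linear_combination h)
  have h5 : (-1 : ZMod n) + -1 ≠ 0 := fun h => h2 (by linear_combination -h)
  fin_cases r <;> simp only [offB, offC, offD, ne_eq, Prod.ext_iff] <;> simp <;> grind

variable {n : ℕ}

theorem continuous_hess (r : Fin 3) (v : ZMod n × ZMod n) :
    Continuous fun x : ZMod n × ZMod n → ℝ => hess n r x v := by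
  simp only [hess_eq]
  fun_prop

theorem hess_translate (r : Fin 3) (x : ZMod n × ZMod n → ℝ) (t v : ZMod n × ZMod n) :
    hess n r (fun u => x (u + t)) v = hess n r x (v + t) := by
  simp only [hess_eq]
  rw [add_right_comm v _ t, add_right_comm v _ t, add_right_comm v _ t]

theorem hess_smul (r : Fin 3) (t : ℝ) (x : ZMod n × ZMod n → ℝ) (v : ZMod n × ZMod n) :
    hess n r (fun u => t * x u) v = t * hess n r x v := by
  simp only [hess_eq]
  ring

theorem hess_add_const (r : Fin 3) (c : ℝ) (x : ZMod n × ZMod n → ℝ) (v : ZMod n × ZMod n) :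
    hess n r (fun u => c + x u) v = hess n r x v := by
  simp only [hess_eq]
  ring

variable [NeZero n]

/-- The vector representing the functional `x ↦ hess n r x v`. -/
noncomputable def hessVec (n : ℕ) [NeZero n] (r : Fin 3) (v : ZMod n × ZMod n) :
    EuclideanSpace ℝ (ZMod n × ZMod n) :=
  -EuclideanSpace.single v 1 + EuclideanSpace.single (v + offB n r) 1
    - EuclideanSpace.single (v + offC n r) 1 + EuclideanSpace.single (v + offD n r) 1

theorem inner_hessVec (r : Fin 3) (v : ZMod n × ZMod n)
    (x : EuclideanSpace ℝ (ZMod n × ZMod n)) :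
    inner ℝ (hessVec n r v) x = hess n r (fun u => x u) v := by
  rw [hess_eq, hessVec]
  simp [inner_add_left, inner_sub_left, inner_neg_left, EuclideanSpace.inner_single_left]

theorem hessVec_apply (r : Fin 3) (v u : ZMod n × ZMod n) :
    hessVec n r v u = -(if u = v then 1 else 0) + (if u = v + offB n r then 1 else 0)
      - (if u = v + offC n r then 1 else 0) + (if u = v + offD n r then 1 else 0) := by
  simp [hessVec]

theorem norm_hessVec (hn : 3 ≤ n) (r : Fin 3) (v : ZMod n × ZMod n) : ‖hessVec n r v‖ = 2 := by
  obtain ⟨h1, h2, h3, h4, h5, h6, -⟩ := off_distinct hn r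
  have h : ‖hessVec n r v‖ ^ 2 = 2 ^ 2 := by
    rw [← real_inner_self_eq_norm_sq, inner_hessVec, hess_eq]
    simp only [hessVec_apply, add_right_inj, add_eq_left, left_eq_add, h1, h2, h3, h4, h5, h6,
      h4.symm, h5.symm, h6.symm, if_true, if_false]
    norm_num
  exact (pow_left_inj₀ (norm_nonneg _) zero_le_two two_ne_zero).1 h

/-- The negative coordinates of `hessVec n r v` are at `v` and at `v + offC n r`, so the vector
determines `v` unless `2 * offC n r = 0`. -/
theorem hessVec_injective (hn : 3 ≤ n) (r : Fin 3) : Function.Injective (hessVec n r) := by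
  obtain ⟨h1, h2, h3, h4, h5, h6, h7⟩ := off_distinct hn r
  have key : ∀ v w, hessVec n r v = hessVec n r w → v = w ∨ v = w + offC n r := by
    intro v w h
    have hv : hessVec n r v v = -1 := by
      rw [hessVec_apply]
      simp [h1, h2, h3]
    rw [h, hessVec_apply] at hv
    by_contra! hc
    rw [if_neg hc.1, if_neg hc.2] at hv
    split_ifs at hv <;> norm_num at hv
  intro v w h
  rcases key v w h with h' | h'
  · exact h'
  rcases key w v h.symm with h'' | h''
  · exact h''.symm
  · exfalso
    apply h7
    have : v + (offC n r + offC n r) = v + 0 := by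
      rw [← add_assoc, ← h'', ← h', add_zero]
    exact add_left_cancel this

/-- The all-ones vector. -/
noncomputable def onesVec (n : ℕ) [NeZero n] : EuclideanSpace ℝ (ZMod n × ZMod n) :=
  WithLp.toLp 2 fun _ => 1

theorem inner_onesVec (x : EuclideanSpace ℝ (ZMod n × ZMod n)) :
    inner ℝ (onesVec n) x = ∑ v, x v := by
  simp [onesVec, PiLp.inner_apply]

theorem norm_onesVec : ‖onesVec n‖ = n := by
  have h : ‖onesVec n‖ ^ 2 = (n : ℝ) ^ 2 := by
    rw [← real_inner_self_eq_norm_sq, inner_onesVec]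
    simp [onesVec, ZMod.card, sq]
  exact (pow_left_inj₀ (norm_nonneg _) (Nat.cast_nonneg n) two_ne_zero).1 h

/-- The hyperplane of mean-zero vectors. -/
noncomputable abbrev meanZero (n : ℕ) [NeZero n] :
    Submodule ℝ (EuclideanSpace ℝ (ZMod n × ZMod n)) :=
  (Submodule.span ℝ {onesVec n})ᗮ

theorem mem_meanZero (x : EuclideanSpace ℝ (ZMod n × ZMod n)) :
    x ∈ meanZero n ↔ ∑ v, x v = 0 := by
  rw [Submodule.mem_orthogonal_singleton_iff_inner_right, inner_onesVec]

theorem finrank_meanZero : finrank ℝ (meanZero n) = n ^ 2 - 1 := by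
  have hn : n ≠ 0 := NeZero.ne n
  have hne : onesVec n ≠ 0 := by
    rw [← norm_ne_zero_iff, norm_onesVec]
    exact_mod_cast hn
  have : Fact (finrank ℝ (EuclideanSpace ℝ (ZMod n × ZMod n)) = (n ^ 2 - 1) + 1) := ⟨by
    have : 0 < n ^ 2 := by positivity
    rw [finrank_euclideanSpace, Fintype.card_prod, ZMod.card, ← sq]
    omega⟩
  exact Submodule.finrank_orthogonal_span_singleton hne

theorem hessVec_mem (r : Fin 3) (v : ZMod n × ZMod n) : hessVec n r v ∈ meanZero n := by
  rw [Submodule.mem_orthogonal_singleton_iff_inner_left, inner_hessVec, hess_eq]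
  simp [onesVec]

/-- A set of functions on the torus, as a subset of Euclidean space. -/
abbrev euc (n : ℕ) [NeZero n] (A : Set (ZMod n × ZMod n → ℝ)) :
    Set (EuclideanSpace ℝ (ZMod n × ZMod n)) :=
  (EuclideanSpace.equiv (ZMod n × ZMod n) ℝ).symm '' A

theorem mem_euc {A : Set (ZMod n × ZMod n → ℝ)} {x : EuclideanSpace ℝ (ZMod n × ZMod n)} :
    x ∈ euc n A ↔ (fun u => x u) ∈ A := by
  constructor
  · rintro ⟨y, hy, rfl⟩
    exact hy
  · intro h
    exact ⟨_, h, rfl⟩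

theorem isCompact_polyP {s : Fin 3 → ℝ} {S : ℝ} (hS : ∀ r, s r ≤ S) (hS0 : 0 ≤ S) :
    IsCompact (polyP n s) := by
  refine IsCompact.of_isClosed_subset
    (isCompact_Icc (a := fun _ => -(4 * (n : ℝ) ^ 2 * S + 1)) (b := fun _ => 4 * n ^ 2 * S + 1)) ?_ ?_
  · simp only [polyP, ofPred_and, ofPred_forall]
    refine (isClosed_eq (by fun_prop) continuous_const).inter ?_
    exact isClosed_iInter fun r => isClosed_iInter fun v =>
      isClosed_le (continuous_hess r v) continuous_const
  · rintro x ⟨h0, hx⟩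
    have := abs_bound hS hS0 hx h0.ge (h0.le.trans (Nat.cast_nonneg n))
    exact ⟨fun v => (abs_le.1 (this v)).1, fun v => (abs_le.1 (this v)).2⟩

theorem isClosed_slab (s : Fin 3 → ℝ) : IsClosed (slab n s) := by
  simp only [slab, ofPred_and, ofPred_forall]
  refine IsClosed.inter ?_ ((isClosed_le (by fun_prop) (by fun_prop)).inter
    (isClosed_le (by fun_prop) (by fun_prop)))
  exact isClosed_iInter fun r => isClosed_iInter fun v =>
    isClosed_le (continuous_hess r v) continuous_const

/-- All facets of the same class are congruent, by translation of the torus. -/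
theorem facet_measure_le (s : Fin 3 → ℝ) (r : Fin 3) (v w : ZMod n × ZMod n) (k : ℕ) :
    μHE[k] (euc n (facet n s r v)) ≤ μHE[k] (euc n (facet n s r w)) := by
  set T := LinearIsometryEquiv.piLpCongrLeft 2 ℝ ℝ (Equiv.addRight (v - w)) with hT
  rw [← T.isometry.euclideanHausdorffMeasure_image (s := euc n (facet n s r w))]
  refine measure_mono fun x hx => ?_
  rw [mem_euc] at hx
  obtain ⟨⟨h0, h1⟩, h2⟩ := hx
  refine ⟨T.symm x, ?_, T.apply_symm_apply x⟩
  have hTx : (fun u => T.symm x u) = fun u => x (u + (v - w)) := by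
    ext u
    simp only [hT, LinearIsometryEquiv.piLpCongrLeft_symm, LinearIsometryEquiv.piLpCongrLeft_apply]
    rfl
  rw [mem_euc, hTx]
  refine ⟨⟨?_, fun r' u => ?_⟩, ?_⟩
  · rw [← h0]
    exact Equiv.sum_comp (Equiv.addRight (v - w)) (fun u => x u)
  · rw [hess_translate r' (fun u => x u)]
    exact h1 _ _
  · rw [hess_translate r (fun u => x u), add_sub_cancel]
    exact h2

/-- The `n²` congruent facets of class `i` lie at distance `s i / 2` from the origin, and the cones
over them have total volume at most that of the polytope. -/
theorem facet_volume_le (hn : 3 ≤ n) {s : Fin 3 → ℝ} {S : ℝ} (hpos : ∀ r, 0 < s r)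
    (hS : ∀ r, s r ≤ S) (i : Fin 3) (v : ZMod n × ZMod n) :
    (n : ℝ≥0∞) ^ 2 * (ENNReal.ofReal (s i / (2 * ((n ^ 2 - 1 : ℕ) : ℝ))) *
      μHE[n ^ 2 - 1 - 1] (euc n (facet n s i v))) ≤ μHE[n ^ 2 - 1] (euc n (polyP n s)) := by
  set P : Set (meanZero n) := Subtype.val ⁻¹' euc n (polyP n s) with hP
  have hsub : euc n (polyP n s) ⊆ range (Subtype.val : meanZero n → _) := by
    intro x hx
    rw [mem_euc] at hx
    exact ⟨⟨x, (mem_meanZero x).2 hx.1⟩, rfl⟩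
  have hPc : IsCompact P := by
    have h1 : IsCompact (euc n (polyP n s)) :=
      (isCompact_polyP hS ((hpos 0).le.trans (hS 0))).image
        (EuclideanSpace.equiv (ZMod n × ZMod n) ℝ).symm.continuous
    exact (Submodule.closed_of_finiteDimensional
      (meanZero n)).isClosedEmbedding_subtypeVal.isCompact_preimage h1
  have hmem : ∀ x : meanZero n, x ∈ P ↔ (fun u => (x : EuclideanSpace ℝ (ZMod n × ZMod n)) u) ∈ polyP n s :=
    fun x => mem_euc
  have hmain := facets_volume_le (V := meanZero n)
    (fun w : ZMod n × ZMod n => (⟨hessVec n i w, hessVec_mem i w⟩ : meanZero n))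
    (fun a b hab => hessVec_injective hn i (congrArg Subtype.val hab)) (ρ := 2) (h := s i)
    two_pos (fun w => norm_hessVec hn i w) (hpos i) hPc ?_ ?_
  · rw [finrank_meanZero] at hmain
    have hval : ∀ w, μHE[n ^ 2 - 1 - 1] (euc n (facet n s i w)) = μHE[n ^ 2 - 1 - 1]
        {x ∈ P | inner ℝ (⟨hessVec n i w, hessVec_mem i w⟩ : meanZero n) x = s i} := by
      intro w
      rw [← isometry_subtype_coe.euclideanHausdorffMeasure_image
        (s := {x ∈ P | inner ℝ (⟨hessVec n i w, hessVec_mem i w⟩ : meanZero n) x = s i})]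
      congr 1
      ext x
      rw [mem_euc]
      constructor
      · rintro ⟨h1, h2⟩
        refine ⟨⟨x, (mem_meanZero x).2 h1.1⟩, ⟨(hmem _).2 h1, ?_⟩, rfl⟩
        rw [Submodule.coe_inner, inner_hessVec]
        exact h2
      · rintro ⟨y, ⟨h1, h2⟩, rfl⟩
        rw [Submodule.coe_inner, inner_hessVec] at h2
        exact ⟨(hmem y).1 h1, h2⟩
    have hvol : volume P = μHE[n ^ 2 - 1] (euc n (polyP n s)) := by
      rw [← InnerProductSpace.euclideanHausdorffMeasure_eq_volume, finrank_meanZero,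
        ← isometry_subtype_coe.euclideanHausdorffMeasure_image (s := P)]
      exact congrArg _ (image_preimage_eq_of_subset hsub)
    rw [hvol] at hmain
    refine le_trans (le_of_eq ?_) hmain
    simp only [← hval]
    rw [Finset.sum_congr rfl fun w _ => by
      rw [(facet_measure_le s i w v _).antisymm (facet_measure_le s i v w _)]]
    simp [ZMod.card, sq]
  · intro x hx t h0 h1
    rw [hmem] at hx ⊢
    refine ⟨?_, fun r u => ?_⟩
    · have : ∑ u, (t * (x : EuclideanSpace ℝ (ZMod n × ZMod n)) u) = 0 := by
        rw [← Finset.mul_sum, hx.1, mul_zero]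
      exact this
    · have := hess_smul r t (fun u => (x : EuclideanSpace ℝ (ZMod n × ZMod n)) u) u
      refine (this.le).trans ?_
      calc t * hess n r (fun u => (x : EuclideanSpace ℝ (ZMod n × ZMod n)) u) u ≤ t * s r :=
            mul_le_mul_of_nonneg_left (hx.2 r u) h0
        _ ≤ s r := mul_le_of_le_one_left (hpos r).le h1
  · intro w x hx
    rw [Submodule.coe_inner, inner_hessVec]
    exact ((hmem x).1 hx).2 i w

/-- The slab is a prism of height one over the polytope, in the direction of the constants. -/
theorem poly_measure_le (s : Fin 3 → ℝ) :
    μHE[n ^ 2 - 1] (euc n (polyP n s)) ≤ volume (slab n s) := by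
  have hn : (0 : ℝ) < n := by exact_mod_cast Nat.pos_of_ne_zero (NeZero.ne n)
  set u : EuclideanSpace ℝ (ZMod n × ZMod n) := (1 / (n : ℝ)) • onesVec n with hu
  have hun : ‖u‖ = 1 := by
    rw [hu, norm_smul, norm_onesVec, Real.norm_of_nonneg (by positivity)]
    field_simp
  have hvol : volume (euc n (slab n s)) = volume (slab n s) := by
    have := (PiLp.volume_preserving_ofLp (ZMod n × ZMod n)).measure_preimage
      (isClosed_slab s).measurableSet.nullMeasurableSet
    rw [← this]
    congr 1
    ext x
    exact mem_euc
  have hmeas : MeasurableSet (euc n (slab n s)) := by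
    have : euc n (slab n s) = WithLp.ofLp ⁻¹' slab n s := by
      ext x
      exact mem_euc
    rw [this]
    exact (PiLp.volume_preserving_ofLp (ZMod n × ZMod n)).measurable (isClosed_slab s).measurableSet
  have hmain := prism_volume_le (v := u) (norm_ne_zero_iff.1 (by rw [hun]; exact one_ne_zero))
    (F := euc n (polyP n s)) (C := euc n (slab n s)) ?_ hmeas ?_
  · rw [hvol, ← ofReal_norm, hun, ENNReal.ofReal_one, one_mul, finrank_euclideanSpace,
      Fintype.card_prod, ZMod.card, ← sq] at hmain
    exact hmain
  · intro y hy
    rw [hu, inner_smul_left, inner_onesVec, (mem_euc.1 hy).1, mul_zero]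
  · intro y hy t h0 h1
    rw [mem_euc] at hy ⊢
    have hval : (fun p => (t • u + y) p) = fun p => t / n + y p := by
      ext p
      simp [hu, onesVec]
      ring
    have hsum : ∑ p : ZMod n × ZMod n, (t / n + y p) = t * n := by
      rw [Finset.sum_add_distrib, hy.1]
      simp [ZMod.card]
      field_simp
    rw [hval]
    refine ⟨fun r p => ?_, ?_, ?_⟩
    · rw [hess_add_const r _ (fun p => y p)]
      exact hy.2 r p
    · rw [hsum]; positivity
    · rw [hsum]; exact mul_le_of_le_one_left hn.le h1.le

end Geometry

/-! ### Asymptotics and conclusion -/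

section Assembly
open Set
open scoped ENNReal

/-- The `(n² - 1)`-st root of the volume bound for the slab is asymptotically at most `e s₀`; the
`2n - 1` boundary coordinates are too few to matter. -/
theorem eventually_volume_bound_le {σ S ε : ℝ} (hσ : 0 < σ) (hS : 0 ≤ S) (hε : 0 < ε) :
    ∃ N : ℕ, ∀ n : ℕ, N ≤ n → Real.exp ((n : ℝ) ^ 2) *
      ((2 * (4 * n ^ 2 * S + 1)) ^ (n ^ 2 - (n - 1) ^ 2) * σ ^ (n - 1) ^ 2)
        ≤ ((Real.exp 1 + ε) * σ) ^ (n ^ 2 - 1) := by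
  set κ := Real.log (Real.exp 1 + ε) - 1 with hκdef
  have hκ : 0 < κ := by
    rw [hκdef, sub_pos, Real.lt_log_iff_exp_lt (by positivity)]
    linarith
  set δ := κ / 16 with hδ
  have hδpos : 0 < δ := by positivity
  set C := Real.log (8 * S + 2) with hC
  have hC0 : 0 ≤ C := Real.log_nonneg (by linarith)
  have ev1 : ∀ᶠ n : ℕ in atTop, Real.log n ≤ δ * n := by
    have := (Real.isLittleO_log_id_atTop.bound hδpos)
    filter_upwards [tendsto_natCast_atTop_atTop.eventually this, eventually_ge_atTop 1] with n h hn
    simp only [id, Real.norm_eq_abs, Nat.abs_cast] at h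
    exact (le_abs_self _).trans h
  have ev2 : ∀ᶠ n : ℕ in atTop, C + |Real.log σ| + 1 ≤ δ * n :=
    (tendsto_natCast_atTop_atTop.const_mul_atTop hδpos).eventually_ge_atTop _
  obtain ⟨N, hN⟩ := eventually_atTop.1 ((ev1.and ev2).and (eventually_ge_atTop 2))
  refine ⟨N, fun n hn => ?_⟩
  obtain ⟨⟨h1, h2⟩, hn2⟩ := hN n hn
  have hnR : (2 : ℝ) ≤ n := by exact_mod_cast hn2
  obtain ⟨m, rfl⟩ : ∃ m, n = m + 1 := ⟨n - 1, by omega⟩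
  have e1 : (m + 1) ^ 2 - (m + 1 - 1) ^ 2 = 2 * m + 1 := by
    rw [Nat.add_sub_cancel]
    have : (m + 1) ^ 2 = m ^ 2 + 2 * m + 1 := by ring
    omega
  have e2 : (m + 1) ^ 2 - 1 = m ^ 2 + 2 * m := by
    have : (m + 1) ^ 2 = m ^ 2 + 2 * m + 1 := by ring
    omega
  rw [e1, e2, Nat.add_sub_cancel]
  set x : ℝ := ((m + 1 : ℕ) : ℝ) with hx
  have hm : (m : ℝ) = x - 1 := by rw [hx]; push_cast; ring
  have hbase : 0 < 2 * (4 * x ^ 2 * S + 1) := by positivity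
  rw [← Real.log_le_log_iff (by positivity) (by positivity),
    Real.log_mul (by positivity) (by positivity), Real.log_mul (by positivity) (by positivity),
    Real.log_exp, Real.log_pow, Real.log_pow, Real.log_pow,
    Real.log_mul (x := Real.exp 1 + ε) (y := σ) (by positivity) hσ.ne']
  have hlog : Real.log (2 * (4 * x ^ 2 * S + 1)) ≤ C + 2 * Real.log x := by
    have : C + 2 * Real.log x = Real.log ((8 * S + 2) * x ^ 2) := by
      rw [Real.log_mul (by positivity) (by positivity), Real.log_pow]
      push_cast
      ring
    rw [this]
    refine Real.log_le_log hbase ?_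
    nlinarith
  have hlogσ := neg_abs_le (Real.log σ)
  push_cast
  rw [hm]
  have hκ' : Real.log (Real.exp 1 + ε) = 16 * δ + 1 := by rw [hδ, hκdef]; ring
  rw [hκ']
  have hlogx : 0 ≤ Real.log x := Real.log_nonneg (by linarith)
  have t1 : (2 * (x - 1) + 1) * Real.log (2 * (4 * x ^ 2 * S + 1))
      ≤ 2 * x * (C + 2 * Real.log x) := by
    calc _ ≤ (2 * (x - 1) + 1) * (C + 2 * Real.log x) :=
          mul_le_mul_of_nonneg_left hlog (by linarith)
      _ ≤ _ := mul_le_mul_of_nonneg_right (by linarith) (by linarith)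
  have t2 : -(2 * x * |Real.log σ|) ≤ 2 * (x - 1) * Real.log σ := by
    have := abs_nonneg (Real.log σ)
    nlinarith
  have t3 : 2 * x * (C + |Real.log σ| + 1 + 2 * Real.log x) ≤ 2 * x * (3 * (δ * x)) :=
    mul_le_mul_of_nonneg_left (by linarith) (by linarith)
  nlinarith

/-- The numerical heart of the final step: `A` and `B` are the normalising constants of the
Hausdorff measures in dimensions `d - 1` and `d`. -/
theorem final_inequality {d : ℕ} (hd : 2 ≤ d) {A B F H K m σ : ℝ} (hA : 0 < A) (hB : 0 < B)
    (hAB : B ^ (d - 1) ≤ A ^ d) (hH : 0 ≤ H) (hF : 0 ≤ F) (hσ : 0 < σ) (hK : 0 ≤ K)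
    (hdm : (d : ℝ) ≤ m)
    (h1 : m * (σ / (2 * d) * (A * F)) ≤ B * H) (h2 : B * H ≤ K ^ d) :
    F ≤ 2 * K / σ * H ^ (1 - 1 / (d : ℝ)) := by
  have hd0 : (0 : ℝ) < d := by positivity
  have hdr : (0 : ℝ) < 1 / (d : ℝ) := by positivity
  have hd1 : (1 : ℝ) < d := by exact_mod_cast hd
  have he : (0 : ℝ) < 1 - 1 / (d : ℝ) := by
    rw [sub_pos, div_lt_one hd0]; exact hd1
  have h3 : A * F ≤ 2 / σ * (B * H) := by
    have : σ / 2 * (A * F) ≤ m * (σ / (2 * d) * (A * F)) := by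
      have e : m * (σ / (2 * d) * (A * F)) = (m / d) * (σ / 2 * (A * F)) := by field_simp
      rw [e]
      exact le_mul_of_one_le_left (by positivity) ((one_le_div hd0).2 hdm)
    rw [div_mul_eq_mul_div, le_div_iff₀ hσ]
    linarith
  have h4 : (B * H) ^ (1 / (d : ℝ)) ≤ K := by
    calc (B * H) ^ (1 / (d : ℝ)) ≤ (K ^ d) ^ (1 / (d : ℝ)) :=
          Real.rpow_le_rpow (by positivity) h2 hdr.le
      _ = K := by rw [one_div, Real.pow_rpow_inv_natCast hK (by omega)]
  have h5 : B ^ (1 - 1 / (d : ℝ)) ≤ A := by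
    have e : B ^ (1 - 1 / (d : ℝ)) = (B ^ (d - 1)) ^ (1 / (d : ℝ)) := by
      rw [← Real.rpow_natCast, ← Real.rpow_mul hB.le, Nat.cast_sub (by omega)]
      congr 1
      field_simp
      simp
    rw [e]
    calc _ ≤ (A ^ d) ^ (1 / (d : ℝ)) := Real.rpow_le_rpow (by positivity) hAB hdr.le
      _ = A := by rw [one_div, Real.pow_rpow_inv_natCast hA.le (by omega)]
  have h6 : B * H ≤ K * (A * H ^ (1 - 1 / (d : ℝ))) := by
    calc B * H = (B * H) ^ (1 / (d : ℝ)) * (B * H) ^ (1 - 1 / (d : ℝ)) := by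
          rw [← Real.rpow_add_of_nonneg (by positivity) hdr.le he.le]
          simp
      _ = (B * H) ^ (1 / (d : ℝ)) * (B ^ (1 - 1 / (d : ℝ)) * H ^ (1 - 1 / (d : ℝ))) := by
          rw [Real.mul_rpow (x := B) (z := 1 - 1 / (d : ℝ)) hB.le hH]
      _ ≤ K * (A * H ^ (1 - 1 / (d : ℝ))) := by gcongr
  refine le_of_mul_le_mul_left ?_ hA
  calc A * F ≤ 2 / σ * (B * H) := h3
    _ ≤ 2 / σ * (K * (A * H ^ (1 - 1 / (d : ℝ)))) := by gcongr
    _ = _ := by ring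

theorem toReal_euclideanHausdorff {n : ℕ} [NeZero n] (k : ℕ)
    (A : Set (EuclideanSpace ℝ (ZMod n × ZMod n))) :
    (μHE[k] A).toReal = volFactor k * (μH[k] A).toReal := by
  rw [Measure.euclideanHausdorffMeasure_def]
  change ((volFactor k • μH[k]) A).toReal = _
  rw [Measure.smul_apply, ENNReal.smul_def, smul_eq_mul, ENNReal.toReal_mul, ENNReal.coe_toReal]

end Assembly

/-- Lemma: upper bound on facet surface areas.  Fix `s` with
`0 < s₀ ≤ s₁ ≤ s₂` and `ε > 0`.  For all sufficiently large `n` and every `i ∈ {0,1,2}`,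
the `(n²-2)`-dimensional surface area of every facet of `P_n(s)` corresponding to an edge
of `E_i(T_n)` is at most `((2e + ε) s₀/s_i) |P_n(s)|^{1 - 1/(n²-1)}`. -/
theorem stmt11 (s : Fin 3 → ℝ) (hs0 : 0 < s 0) (h01 : s 0 ≤ s 1) (h12 : s 1 ≤ s 2)
    (ε : ℝ) (hε : 0 < ε) :
    ∃ N : ℕ, ∀ (n : ℕ) [NeZero n], N ≤ n →
      ∀ (i : Fin 3) (v : ZMod n × ZMod n),
        evol n ((n : ℝ) ^ 2 - 2) (facet n s i v)
          ≤ ((2 * Real.exp 1 + ε) * s 0 / s i)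
              * evol n ((n : ℝ) ^ 2 - 1) (polyP n s) ^ (1 - 1 / ((n : ℝ) ^ 2 - 1)) := by
  have hpos : ∀ r, 0 < s r := by
    intro r
    fin_cases r
    · exact hs0
    · exact hs0.trans_le h01
    · exact hs0.trans_le (h01.trans h12)
  have hS : ∀ r, s r ≤ s 2 := by
    intro r
    fin_cases r
    · exact h01.trans h12
    · exact h12
    · exact le_rfl
  -- `2 * (e + ε / 2) = 2 * e + ε`
  obtain ⟨N, hN⟩ := eventually_volume_bound_le hs0 (hpos 2).le (half_pos hε)
  refine ⟨max N 3, fun n _ hn i v => ?_⟩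
  have hn3 : 3 ≤ n := (le_max_right _ _).trans hn
  have hq := hN n ((le_max_left _ _).trans hn)
  have hsq : 9 ≤ n ^ 2 := by nlinarith
  set d := n ^ 2 - 1 with hd
  have hd1 : (n : ℝ) ^ 2 - 1 = (d : ℝ) := by
    rw [hd, Nat.cast_sub (by omega)]; push_cast; ring
  have hd2 : (n : ℝ) ^ 2 - 2 = ((d - 1 : ℕ) : ℝ) := by
    rw [Nat.cast_sub (by omega), ← hd1]; push_cast; ring
  have hvol : μHE[d] (euc n (polyP n s)) ≤ ENNReal.ofReal (((Real.exp 1 + ε / 2) * s 0) ^ d) :=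
    (poly_measure_le s).trans ((slab_volume_le hs0 hS).trans (ENNReal.ofReal_le_ofReal hq))
  have hfac := facet_volume_le hn3 hpos hS i v
  rw [← hd] at hfac
  have hvol' := ENNReal.toReal_mono ENNReal.ofReal_ne_top hvol
  have hfac' := ENNReal.toReal_mono (ne_top_of_le_ne_top ENNReal.ofReal_ne_top hvol) hfac
  rw [ENNReal.toReal_mul, ENNReal.toReal_mul, ENNReal.toReal_pow, ENNReal.toReal_natCast,
    ENNReal.toReal_ofReal (div_nonneg (hpos i).le (by positivity)), toReal_euclideanHausdorff,
    toReal_euclideanHausdorff] at hfac'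
  rw [ENNReal.toReal_ofReal (by positivity), toReal_euclideanHausdorff] at hvol'
  have hAB : (volFactor d : ℝ) ^ (d - 1) ≤ (volFactor (d - 1) : ℝ) ^ d := by
    have h := volFactor_pow_le (k := d - 1) (by omega)
    rw [Nat.sub_add_cancel (by omega : 1 ≤ d)] at h
    exact_mod_cast h
  have hfpos : ∀ k, 0 < (volFactor k : ℝ) := fun k =>
    NNReal.coe_pos.2 (pos_iff_ne_zero.2 (volFactor_ne_zero k))
  have hmain := final_inequality (by omega : 2 ≤ d) (hfpos (d - 1)) (hfpos d) hAB
    ENNReal.toReal_nonneg ENNReal.toReal_nonneg (hpos i) (by positivity)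
    (by rw [← hd1]; linarith) hfac' hvol'
  rw [evol, evol, hd2, hd1]
  refine hmain.trans (le_of_eq ?_)
  congr 2
  ring
end

section
/- Suppose ε₀ > 0 and 2 = s₀ ≤ s₁ ≤ s₂. Let x ∈ P_n(s) satisfy ‖x‖_{ℓ∞} ≥ ε₀ n². Then for every p ∈ [1, ∞), ‖x‖_{ℓ_p} ≥ (√3 ε₀ n / (8 s₂))^{2/p} · (ε₀ n² / 2). -/
open MeasureTheory Filter

/-- A semiconvex sequence that returns to its initial value after `n` steps has
initial slope at most `K n / 2`. -/
lemma slope_le_of_return (f : ℕ → ℝ) (K : ℝ) (hK : 0 ≤ K) (n : ℕ) (hn : 0 < n)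
    (hret : f n = f 0) (hf : ∀ k, -K ≤ f (k + 2) - 2 * f (k + 1) + f k) :
    f 1 - f 0 ≤ K * n / 2 := by
  have hd : ∀ k : ℕ, f 1 - f 0 - k * K ≤ f (k + 1) - f k := by
    intro k
    induction k with
    | zero => simp
    | succ k ih =>
      have := hf k
      push_cast
      linarith
  have hs : ∀ m : ℕ, f 0 + m * (f 1 - f 0) - K * (m * m) / 2 ≤ f m := by
    intro m
    induction m with
    | zero => simp
    | succ m ih =>
      have := hd m
      push_cast
      nlinarith
  have h := hs n
  rw [hret] at h
  have hn' : (0 : ℝ) < n := by exact_mod_cast hn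
  by_contra hc
  push Not at hc
  nlinarith

/-- On an abelian group of exponent dividing `n`, a lower bound `-2 S` for the second differences
in direction `e` bounds the first differences by `S n`. -/
lemma lipschitz_step {G : Type*} [AddCommGroup G] (x : G → ℝ) (S : ℝ) (hS : 0 ≤ S)
    (n : ℕ) (hn : 0 < n) (e : G) (he : n • e = 0)
    (h : ∀ v, -(2 * S) ≤ x (v + e) + x (v - e) - 2 * x v) (v : G) :
    |x (v + e) - x v| ≤ S * n := by
  rw [abs_le]
  have h1 := slope_le_of_return (fun k => x (v + k • e)) (2 * S) (by positivity) n hn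
    (by simp [he]) (by
      intro k
      have := h (v + (k + 1) • e)
      have e1 : v + (k + 1) • e + e = v + (k + 2) • e := by module
      have e2 : v + (k + 1) • e - e = v + k • e := by module
      rw [e1, e2] at this
      linarith)
  -- the lower bound is the upper bound for the reversed direction, started at `v + e`
  have h2 := slope_le_of_return (fun k => x (v + e - k • e)) (2 * S) (by positivity) n hn
    (by simp [he]) (by
      intro k
      have := h (v + e - (k + 1) • e)
      have e1 : v + e - (k + 1) • e + e = v + e - k • e := by module
      have e2 : v + e - (k + 1) • e - e = v + e - (k + 2) • e := by module
      rw [e1, e2] at this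
      linarith)
  simp only [one_smul, zero_smul, add_zero, sub_zero, add_sub_cancel_right] at h1 h2
  constructor <;> linarith

lemma second_diff_fst_s12 {n : ℕ} [NeZero n] {s : Fin 3 → ℝ} {x : ZMod n × ZMod n → ℝ}
    (hx : x ∈ polyP n s) (v : ZMod n × ZMod n) :
    -(s 0 + s 1) ≤ x (v + (1, 0)) + x (v - (1, 0)) - 2 * x v := by
  have h0 := hx.2 0 (v - (1, 0))
  have h1 := hx.2 1 (v + (1, 0))
  obtain ⟨a, b⟩ := v
  simp only [hess, Prod.mk_add_mk, Prod.mk_sub_mk, if_true, one_ne_zero, if_false] at h0 h1 ⊢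
  ring_nf at h0 h1 ⊢
  linarith

lemma second_diff_snd_s12 {n : ℕ} [NeZero n] {s : Fin 3 → ℝ} {x : ZMod n × ZMod n → ℝ}
    (hx : x ∈ polyP n s) (v : ZMod n × ZMod n) :
    -(s 1 + s 2) ≤ x (v + (0, 1)) + x (v - (0, 1)) - 2 * x v := by
  have h1 := hx.2 1 (v - (0, 1))
  have h2 := hx.2 2 (v + (0, 1))
  obtain ⟨a, b⟩ := v
  have t0 : (2 : Fin 3) ≠ 0 := by decide
  have t1 : (2 : Fin 3) ≠ 1 := by decide
  simp only [hess, Prod.mk_add_mk, Prod.mk_sub_mk, if_true, one_ne_zero, t0, t1, if_false]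
    at h1 h2 ⊢
  ring_nf at h1 h2 ⊢
  linarith

/-- Iterated form of a Lipschitz bound in the two coordinate directions. -/
lemma lipschitz_box {n : ℕ} {x : ZMod n × ZMod n → ℝ} {L : ℝ}
    (h1 : ∀ v, |x (v + (1, 0)) - x v| ≤ L) (h2 : ∀ v, |x (v + (0, 1)) - x v| ≤ L)
    (v : ZMod n × ZMod n) (i j : ℕ) :
    |x (v + ((i : ZMod n), (j : ZMod n))) - x v| ≤ (i + j) * L := by
  induction i with
  | zero =>
    induction j with
    | zero => simp [← Prod.zero_eq_mk]
    | succ j ih =>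
      have h := h2 (v + (((0 : ℕ) : ZMod n), (j : ZMod n)))
      have e : v + (((0 : ℕ) : ZMod n), (j : ZMod n)) + (0, 1)
          = v + (((0 : ℕ) : ZMod n), ((j + 1 : ℕ) : ZMod n)) := by
        ext <;> simp [add_assoc]
      rw [e] at h
      have := (abs_sub_le _ _ _).trans (add_le_add h ih)
      push_cast at this ⊢
      linarith
  | succ i ih =>
    have h := h1 (v + ((i : ZMod n), (j : ZMod n)))
    have e : v + ((i : ZMod n), (j : ZMod n)) + (1, 0)
        = v + (((i + 1 : ℕ) : ZMod n), (j : ZMod n)) := by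
      ext <;> simp [add_assoc]
    rw [e] at h
    have := (abs_sub_le _ _ _).trans (add_le_add h ih)
    push_cast at this ⊢
    linarith

/-- A function of zero sum takes, for each `v`, a value at some `w` of sign opposite to `x v`,
so that `|x v|` is at most the oscillation `|x w - x v|`. -/
lemma exists_abs_le_osc {V : Type*} [Fintype V] (x : V → ℝ) (h : ∑ v, x v = 0) (v : V) :
    ∃ w, |x v| ≤ |x w - x v| := by
  by_contra! hc
  rcases le_or_gt 0 (x v) with hv | hv
  · have hpos : ∀ w, 0 < x w := by
      intro w
      have := hc w
      rw [abs_of_nonneg hv, abs_lt] at this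
      linarith [this.1]
    exact (Finset.sum_pos (fun w _ => hpos w) ⟨v, Finset.mem_univ v⟩).ne' h
  · have hneg : ∀ w, x w < 0 := by
      intro w
      have := hc w
      rw [abs_of_neg hv, abs_lt] at this
      linarith [this.2]
    exact (Finset.sum_neg (fun w _ => hneg w) ⟨v, Finset.mem_univ v⟩).ne h

/-- Lemma: `ℓ_p` lower bound.  Let `ε₀ > 0` and `2 = s₀ ≤ s₁ ≤ s₂`.
If `x ∈ P_n(s)` has `‖x‖_{ℓ∞} ≥ ε₀ n²`, then for every `p ∈ [1, ∞)`,
`‖x‖_{ℓ_p} ≥ (√3 ε₀ n/(8 s₂))^{2/p} (ε₀ n²/2)`.  (The `ℓ∞` norm on functions on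
`V(T_n)` is the sup norm `‖x‖`.) -/
theorem stmt12 (n : ℕ) [NeZero n] (ε₀ : ℝ) (hε₀ : 0 < ε₀)
    (s : Fin 3 → ℝ) (hs0 : s 0 = 2) (h01 : s 0 ≤ s 1) (h12 : s 1 ≤ s 2)
    (x : (ZMod n × ZMod n) → ℝ) (hx : x ∈ polyP n s)
    (hinf : ε₀ * (n : ℝ) ^ 2 ≤ ‖x‖) (p : ℝ) (hp : 1 ≤ p) :
    (Real.sqrt 3 * ε₀ * n / (8 * s 2)) ^ (2 / p) * (ε₀ * (n : ℝ) ^ 2 / 2)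
      ≤ (∑ v : ZMod n × ZMod n, |x v| ^ p) ^ (1 / p) := by
  have hn : 0 < n := NeZero.pos n
  have hnR : (0 : ℝ) < n := by exact_mod_cast hn
  have hS : 0 < s 2 := by linarith
  have hp0 : 0 < p := by linarith
  have L1 : ∀ v, |x (v + (1, 0)) - x v| ≤ s 2 * n :=
    lipschitz_step x (s 2) hS.le n hn (1, 0) (by simp) fun v => by
      have := second_diff_fst_s12 hx v
      linarith
  have L2 : ∀ v, |x (v + (0, 1)) - x v| ≤ s 2 * n :=
    lipschitz_step x (s 2) hS.le n hn (0, 1) (by simp) fun v => by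
      have := second_diff_snd_s12 hx v
      linarith
  have L := lipschitz_box L1 L2
  obtain ⟨v₀, hv₀⟩ : ∃ v, ‖x‖ = |x v| := by
    obtain ⟨v, hv⟩ := Finite.exists_max (fun v => |x v|)
    refine ⟨v, le_antisymm ((pi_norm_le_iff_of_nonneg (abs_nonneg _)).2 hv) ?_⟩
    exact norm_le_pi_norm x v
  rw [hv₀] at hinf
  have hε : ε₀ ≤ 2 * s 2 := by
    obtain ⟨w, hw⟩ := exists_abs_le_osc x hx.1 v₀
    have h := L v₀ (w - v₀).1.val (w - v₀).2.val
    rw [ZMod.natCast_zmod_val, ZMod.natCast_zmod_val, Prod.mk.eta, add_sub_cancel] at h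
    have hi : ((w - v₀).1.val : ℝ) ≤ n := by exact_mod_cast (ZMod.val_lt _).le
    have hj : ((w - v₀).2.val : ℝ) ≤ n := by exact_mod_cast (ZMod.val_lt _).le
    have h3 : ε₀ * (n : ℝ) ^ 2 ≤ (n + n) * (s 2 * n) :=
      (hinf.trans (hw.trans h)).trans (by gcongr)
    have hn2 : (0 : ℝ) < (n : ℝ) ^ 2 := by positivity
    nlinarith
  set m := ⌊ε₀ * n / (4 * s 2)⌋₊ with hm
  have hmle : (m : ℝ) ≤ ε₀ * n / (4 * s 2) := Nat.floor_le (by positivity)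
  have hmgt : ε₀ * n / (4 * s 2) < m + 1 := Nat.lt_floor_add_one _
  have hmle' : (m : ℝ) * (4 * s 2) ≤ ε₀ * n := (le_div_iff₀ (by positivity)).1 hmle
  have hmn : m < n := by
    have : (m : ℝ) < n := by
      by_contra! hc
      nlinarith
    exact_mod_cast this
  let φ : ℕ × ℕ → ZMod n × ZMod n := fun q => v₀ + ((q.1 : ZMod n), (q.2 : ZMod n))
  let B := Finset.range (m + 1) ×ˢ Finset.range (m + 1)
  have hinj : Set.InjOn φ B := by
    rintro ⟨i, j⟩ h ⟨i', j'⟩ h' heq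
    simp only [B, Finset.coe_product, Finset.coe_range, Set.mem_prod, Set.mem_Iio] at h h'
    simp only [φ, add_right_inj, Prod.mk.injEq] at heq
    have aux : ∀ a b : ℕ, a < m + 1 → b < m + 1 → (a : ZMod n) = b → a = b := by
      intro a b ha hb hab
      rw [ZMod.natCast_eq_natCast_iff'] at hab
      rwa [Nat.mod_eq_of_lt (by omega), Nat.mod_eq_of_lt (by omega)] at hab
    rw [aux i i' h.1 h'.1 heq.1, aux j j' h.2 h'.2 heq.2]
  have hbox : ∀ q ∈ B, ε₀ * (n : ℝ) ^ 2 / 2 ≤ |x (φ q)| := by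
    rintro ⟨i, j⟩ h
    simp only [B, Finset.mem_product, Finset.mem_range, Nat.lt_succ_iff] at h
    have hi : (i : ℝ) ≤ m := by exact_mod_cast h.1
    have hj : (j : ℝ) ≤ m := by exact_mod_cast h.2
    have h3 : |x (φ (i, j)) - x v₀| ≤ (m + m) * (s 2 * n) := (L v₀ i j).trans (by gcongr)
    have h4 := abs_sub_abs_le_abs_sub (x v₀) (x (φ (i, j)))
    rw [abs_sub_comm] at h4
    nlinarith
  have hsum : ((m : ℝ) + 1) ^ 2 * (ε₀ * (n : ℝ) ^ 2 / 2) ^ p ≤ ∑ v, |x v| ^ p := by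
    calc ((m : ℝ) + 1) ^ 2 * (ε₀ * (n : ℝ) ^ 2 / 2) ^ p
        = ∑ q ∈ B, (ε₀ * (n : ℝ) ^ 2 / 2) ^ p := by
          simp [B, pow_two]
      _ ≤ ∑ q ∈ B, |x (φ q)| ^ p := Finset.sum_le_sum fun q hq =>
          Real.rpow_le_rpow (by positivity) (hbox q hq) hp0.le
      _ = ∑ v ∈ B.image φ, |x v| ^ p := 
          (Finset.sum_image (f := fun v => |x v| ^ p) hinj).symm
      _ ≤ ∑ v, |x v| ^ p := Finset.sum_le_sum_of_subset_of_nonneg (Finset.subset_univ _)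
          fun v _ _ => by positivity
  have hbase : Real.sqrt 3 * ε₀ * n / (8 * s 2) ≤ m + 1 := by
    have h3 : Real.sqrt 3 ≤ 2 := Real.sqrt_le_iff.2 (by norm_num)
    calc Real.sqrt 3 * ε₀ * n / (8 * s 2) ≤ 2 * ε₀ * n / (8 * s 2) := by gcongr
      _ = ε₀ * n / (4 * s 2) := by field_simp; norm_num
      _ ≤ m + 1 := hmgt.le
  calc (Real.sqrt 3 * ε₀ * n / (8 * s 2)) ^ (2 / p) * (ε₀ * (n : ℝ) ^ 2 / 2)
      ≤ ((m : ℝ) + 1) ^ (2 / p) * (ε₀ * (n : ℝ) ^ 2 / 2) := by gcongr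
    _ = (((m : ℝ) + 1) ^ 2 * (ε₀ * (n : ℝ) ^ 2 / 2) ^ p) ^ (1 / p) := by
        rw [Real.mul_rpow (by positivity) (by positivity), ← Real.rpow_mul (by positivity),
          mul_one_div_cancel hp0.ne', Real.rpow_one, ← Real.rpow_natCast ((m : ℝ) + 1),
          ← Real.rpow_mul (by positivity)]
        congr 2
        push_cast
        ring
    _ ≤ _ := Real.rpow_le_rpow (by positivity) hsum (by positivity)
end

section
/- Let x : V(T_n) → ℝ satisfy Σ_{v∈V(T_n)} x(v) = 0 and ∇²x(e) ≤ 0 for every rhombus e ∈ E(T_n). Then x is identically 0. Equivalently, the polytope P_n(0) consists of the zero function alone. -/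
/-!
Each hessian is a signed sum of two negative and two positive translates of `x`, so its sum over
the torus vanishes; being nonpositive everywhere, it is zero everywhere (`hess_eq_zero`).
The vanishing hessians say that the difference of `x` in direction `(1,0)` is invariant under
translation by `(0,1)` and by `(1,1)`, and that the difference in direction `(0,1)` is invariant
under translation by `(1,0)` and by `(1,1)`. Either pair of translations generates the torus, so
both differences are constant (`const_of_invariant`), and the constants are zero because differences
sum to zero over the torus (`invariant_of_diff_invariant`). Hence `x` itself is constant, and its
mean is zero.
-/

open MeasureTheory Filter

/-- Translation invariance of sums over the torus. -/
lemma torus_sum_translate {n : ℕ} [NeZero n] (x : ZMod n × ZMod n → ℝ) (w : ZMod n × ZMod n) :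
    ∑ v, x (v + w) = ∑ v, x v :=
  Equiv.sum_comp (Equiv.addRight w) x

lemma hess_eq_zero {n : ℕ} [NeZero n] (x : ZMod n × ZMod n → ℝ)
    (hhess : ∀ (r : Fin 3) (v : ZMod n × ZMod n), hess n r x v ≤ 0)
    (r : Fin 3) (v : ZMod n × ZMod n) : hess n r x v = 0 := by
  have hs : ∑ v, hess n r x v = 0 := by
    unfold hess
    split_ifs <;>
      simp only [Finset.sum_add_distrib, Finset.sum_sub_distrib, Finset.sum_neg_distrib,
        torus_sum_translate] <;> ring
  exact (Finset.sum_eq_zero_iff_of_nonpos (fun v _ => hhess r v)).1 hs v (Finset.mem_univ v)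

/-- The translations by `(1,0)` and `(0,1)` act transitively on the torus. -/
lemma const_of_invariant {n : ℕ} [NeZero n] (f : ZMod n × ZMod n → ℝ)
    (h₁ : ∀ v, f (v + (1, 0)) = f v) (h₂ : ∀ v, f (v + (0, 1)) = f v)
    (v : ZMod n × ZMod n) : f v = f 0 := by
  have key : ∀ j k : ℕ, f ((j : ZMod n), (k : ZMod n)) = f 0 := by
    intro j k
    induction j with
    | zero =>
      induction k with
      | zero => simp [← Prod.zero_eq_mk]
      | succ k ih => rw [← ih, ← h₂ (_, (k : ZMod n))]; simp
    | succ j ih => rw [← ih, ← h₁ ((j : ZMod n), _)]; simp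
  simpa using key v.1.val v.2.val

/-- If the difference of `x` in direction `w` is invariant under both generators, it is a constant
whose sum over the torus is zero, so `x` is invariant under translation by `w`. -/
lemma invariant_of_diff_invariant {n : ℕ} [NeZero n] (x : ZMod n × ZMod n → ℝ)
    (w : ZMod n × ZMod n)
    (h₁ : ∀ v, x (v + (1, 0) + w) - x (v + (1, 0)) = x (v + w) - x v)
    (h₂ : ∀ v, x (v + (0, 1) + w) - x (v + (0, 1)) = x (v + w) - x v)
    (v : ZMod n × ZMod n) : x (v + w) = x v := by
  have hc := const_of_invariant (fun v => x (v + w) - x v) h₁ h₂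
  have hs : ∑ v, (x (v + w) - x v) = 0 := by
    rw [Finset.sum_sub_distrib, torus_sum_translate, sub_self]
  rw [Finset.sum_congr rfl (fun v _ => hc v)] at hs
  simp only [Finset.sum_const, smul_eq_zero, Finset.card_univ, Fintype.card_ne_zero,
    false_or] at hs
  have := hc v
  simp only [hs] at this
  linarith


/-- `P_n(0)` is trivial.  If `x : V(T_n) → ℝ` has mean zero and all its
discrete hessians are `≤ 0`, then `x ≡ 0`; equivalently `P_n(0) = {0}`. -/
theorem stmt16 (n : ℕ) [NeZero n] (x : (ZMod n × ZMod n) → ℝ)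
    (hsum : ∑ v : ZMod n × ZMod n, x v = 0)
    (hhess : ∀ (r : Fin 3) (v : ZMod n × ZMod n), hess n r x v ≤ 0) :
    x = 0 := by
  have H0 : ∀ v, -x v + x (v + (1, 0)) - x (v + (2, 1)) + x (v + (1, 1)) = 0 := fun v => by
    simpa [hess] using hess_eq_zero x hhess 0 v
  have H1 : ∀ v, -x v + x (v + (0, 1)) - x (v + (-1, 1)) + x (v + (-1, 0)) = 0 := fun v => by
    simpa [hess] using hess_eq_zero x hhess 1 v
  have H2 : ∀ v, -x v + x (v + (-1, -1)) - x (v + (-1, -2)) + x (v + (0, -1)) = 0 := fun v => by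
    simpa [hess] using hess_eq_zero x hhess 2 v
  -- The same three identities in coordinates, translated so that all offsets are nonnegative.
  have K0 : ∀ a b, -x (a, b) + x (a + 1, b) - x (a + 1 + 1, b + 1) + x (a + 1, b + 1) = 0 := by
    intro a b
    have := H0 (a, b)
    simp only [Prod.mk_add_mk, add_zero] at this
    rwa [show a + 2 = a + 1 + 1 by ring] at this
  have K1 : ∀ a b, -x (a + 1, b) + x (a + 1, b + 1) - x (a, b + 1) + x (a, b) = 0 := by
    intro a b
    have := H1 (a + 1, b)
    simpa only [Prod.mk_add_mk, add_zero, add_neg_cancel_right] using this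
  have K2 : ∀ a b, -x (a + 1, b + 1 + 1) + x (a, b + 1) - x (a, b) + x (a + 1, b + 1) = 0 := by
    intro a b
    have := H2 (a + 1, b + 1 + 1)
    simp only [Prod.mk_add_mk, add_zero, add_neg_cancel_right] at this
    rwa [show b + 1 + 1 + -2 = b by ring] at this
  have i₁ : ∀ v, x (v + (1, 0)) = x v := by
    apply invariant_of_diff_invariant <;> rintro ⟨a, b⟩ <;> simp only [Prod.mk_add_mk, add_zero]
    · linarith [K0 a b, K1 (a + 1) b]
    · linarith [K1 a b]
  have i₂ : ∀ v, x (v + (0, 1)) = x v := by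
    apply invariant_of_diff_invariant <;> rintro ⟨a, b⟩ <;> simp only [Prod.mk_add_mk, add_zero]
    · linarith [K1 a b]
    · linarith [K2 a b, K1 a (b + 1)]
  have hc := const_of_invariant x i₁ i₂
  rw [Finset.sum_congr rfl (fun v _ => hc v)] at hsum
  simp only [Finset.sum_const, smul_eq_zero, Finset.card_univ, Fintype.card_ne_zero,
    false_or] at hsum
  funext v
  rw [hc v, hsum, Pi.zero_apply]
end

section
/- Let s = (s₀,s₁,s₂) with 0 < s₀ ≤ s₁ ≤ s₂ and let x ∈ P_n(s). Then for every pair of adjacent vertices u, v of T_n (i.e. |u − v| = 1 in the lattice metric), |x(u) − x(v)| ≤ 4 n s₂; consequently ‖x‖_{ℓ∞} ≤ C s₂ n² for a universal constant C. -/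
/-!
Adding the constraints of two rhombi that share a triangle and have an edge direction `e` in
common cancels two vertices and leaves `2 x(w) - x(w+e) - x(w-e) ≤ 2 s₂` (`second_diff`): along
each lattice direction `x` is convex up to an error `2 s₂`.  Such a function climbs by at least
`k δ - k(k-1) s₂` in `k` steps if its first increment is `δ`; since `n` steps return to the start
of the closed line, `δ ≤ (n-1) s₂` (`incr_le`), and reversing `e` bounds `δ` below.

Any two vertices are joined by at most `2n` unit steps and `x` has mean zero, so it takes a value
`≤ 0` and a value `≥ 0`; this gives the sup bound with `C = 8`.
-/

open MeasureTheory Filter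

/-- Almost-convexity of a point of the polytope along each of the three lattice directions. -/
lemma second_diff {n : ℕ} {s : Fin 3 → ℝ} (h01 : s 0 ≤ s 1) (h12 : s 1 ≤ s 2)
    {x : ZMod n × ZMod n → ℝ} (hx : ∀ r v, hess n r x v ≤ s r) {e : ZMod n × ZMod n}
    (he : e = (1, 0) ∨ e = (0, 1) ∨ e = (1, 1)) (w : ZMod n × ZMod n) :
    2 * x w - x (w + e) - x (w - e) ≤ 2 * s 2 := by
  have H0 : ∀ v, -x v + x (v + (1, 0)) - x (v + (2, 1)) + x (v + (1, 1)) ≤ s 0 := fun v => by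
    simpa [hess] using hx 0 v
  have H1 : ∀ v, -x v + x (v + (0, 1)) - x (v + (-1, 1)) + x (v + (-1, 0)) ≤ s 1 := fun v => by
    simpa [hess] using hx 1 v
  have H2 : ∀ v, -x v + x (v + (-1, -1)) - x (v + (-1, -2)) + x (v + (0, -1)) ≤ s 2 := fun v => by
    simpa [hess] using hx 2 v
  obtain ⟨a, b⟩ := w
  rcases he with rfl | rfl | rfl
  · have A := H0 (a - 1, b - 1)
    have B := H1 (a, b - 1)
    simp only [Prod.mk_add_mk, Prod.mk_sub_mk] at A B ⊢
    ring_nf at A B ⊢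
    linarith
  · have A := H1 (a, b - 1)
    have B := H2 (a, b + 1)
    simp only [Prod.mk_add_mk, Prod.mk_sub_mk] at A B ⊢
    ring_nf at A B ⊢
    linarith
  · have A := H0 (a - 1, b - 1)
    have B := H2 (a + 1, b + 1)
    simp only [Prod.mk_add_mk, Prod.mk_sub_mk] at A B ⊢
    ring_nf at A B ⊢
    linarith

/-- The increment bound along a closed line on which `x` is convex up to an error `2 S`. -/
lemma incr_le {n : ℕ} [NeZero n] {S : ℝ} (hS : 0 ≤ S) {x : ZMod n × ZMod n → ℝ}
    {e : ZMod n × ZMod n} (h : ∀ w, 2 * x w - x (w + e) - x (w - e) ≤ 2 * S)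
    (w : ZMod n × ZMod n) : x (w + e) - x w ≤ n * S := by
  have key : ∀ k : ℕ,
      x (w + e) - x w - 2 * k * S ≤ x (w + (k + 1) • e) - x (w + k • e) ∧
      k * (x (w + e) - x w) - k * (k - 1) * S ≤ x (w + k • e) - x w := by
    intro k
    induction k with
    | zero => simp
    | succ k ih =>
      obtain ⟨h1, h2⟩ := ih
      have h3 := h (w + (k + 1) • e)
      have e1 : w + (k + 1) • e + e = w + (k + 1 + 1) • e := by rw [add_assoc, ← succ_nsmul]
      have e2 : w + (k + 1) • e - e = w + k • e := by rw [succ_nsmul]; abel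
      rw [e1, e2] at h3
      push_cast
      constructor <;> linarith
  have hn := (key n).2
  have hne : n • e = 0 := by ext <;> simp
  have hpos : (0 : ℝ) < n := by exact_mod_cast NeZero.pos n
  rw [hne, add_zero, sub_self] at hn
  have : x (w + e) - x w ≤ (n - 1) * S := by
    refine le_of_mul_le_mul_left ?_ hpos
    linarith
  linarith

/-- Two-sided form of `incr_le`, using that its hypothesis is invariant under `e ↦ -e`. -/
lemma abs_incr_le {n : ℕ} [NeZero n] {S : ℝ} (hS : 0 ≤ S) {x : ZMod n × ZMod n → ℝ}
    {e : ZMod n × ZMod n} (h : ∀ w, 2 * x w - x (w + e) - x (w - e) ≤ 2 * S)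
    (w : ZMod n × ZMod n) : |x (w + e) - x w| ≤ n * S := by
  have h1 := incr_le hS h w
  have h2 := incr_le (x := x) (e := -e) hS (fun w => by
    have := h w
    rw [sub_neg_eq_add, ← sub_eq_add_neg]
    linarith) (w + e)
  rw [add_neg_cancel_right] at h2
  exact abs_le.2 ⟨by linarith, h1⟩

lemma abs_steps_le {n : ℕ} {L : ℝ} {x : ZMod n × ZMod n → ℝ} {e : ZMod n × ZMod n}
    (h : ∀ w, |x (w + e) - x w| ≤ L) (w : ZMod n × ZMod n) (k : ℕ) :
    |x (w + k • e) - x w| ≤ k * L := by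
  induction k with
  | zero => simp
  | succ k ih =>
    have h1 := h (w + k • e)
    rw [add_assoc, ← succ_nsmul] at h1
    have h2 := abs_sub_le (x (w + (k + 1) • e)) (x (w + k • e)) (x w)
    push_cast
    linarith

/-- Lipschitz bound on points of `P_n(s)`.  Let `0 < s₀ ≤ s₁ ≤ s₂` and
`x ∈ P_n(s)`.  Then for every pair of adjacent vertices `u, v` of `T_n` (the neighbours of
`v` being `v ± 1, v ± ω, v ± ω²`, i.e. `u - v ∈ {±(1,0), ±(0,1), ±(1,1)}`),
`|x(u) - x(v)| ≤ 4 n s₂`; consequently `‖x‖_{ℓ∞} ≤ C s₂ n²` for a universal constant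
`C`. -/
theorem stmt17 :
    ∃ C : ℝ, ∀ (n : ℕ) [NeZero n],
      ∀ (s : Fin 3 → ℝ), 0 < s 0 → s 0 ≤ s 1 → s 1 ≤ s 2 →
        ∀ x ∈ polyP n s,
          (∀ u v : ZMod n × ZMod n,
            (u - v = (1, 0) ∨ u - v = (0, 1) ∨ u - v = (1, 1) ∨
              u - v = (-1, 0) ∨ u - v = (0, -1) ∨ u - v = (-1, -1)) →
            |x u - x v| ≤ 4 * n * s 2) ∧
          ‖x‖ ≤ C * s 2 * (n : ℝ) ^ 2 := by
  refine ⟨8, fun n _ s h0 h01 h12 x hx => ?_⟩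
  obtain ⟨hsum, hx⟩ := hx
  have hS : 0 ≤ s 2 := by linarith
  have hnS : 0 ≤ n * s 2 := by positivity
  have step : ∀ e : ZMod n × ZMod n, (e = (1, 0) ∨ e = (0, 1) ∨ e = (1, 1)) →
      ∀ w, |x (w + e) - x w| ≤ 4 * n * s 2 := fun e he w =>
    (abs_incr_le hS (second_diff h01 h12 hx he) w).trans (by linarith)
  constructor
  · intro u v huv
    have pos : ∀ u v, (u - v = (1, 0) ∨ u - v = (0, 1) ∨ u - v = (1, 1)) →
        |x u - x v| ≤ 4 * n * s 2 := fun u v h => by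
      simpa using step (u - v) h v
    by_cases h : u - v = (1, 0) ∨ u - v = (0, 1) ∨ u - v = (1, 1)
    · exact pos u v h
    · rw [abs_sub_comm]
      refine pos v u ?_
      rw [← neg_sub u v]
      rcases huv with h' | h' | h' | h' | h' | h' <;> simp_all
  · have osc : ∀ u v, x v - x u ≤ 8 * s 2 * (n : ℝ) ^ 2 := by
      intro u v
      obtain ⟨a, ha⟩ : ∃ a, a = (v - u).1.val := ⟨_, rfl⟩
      obtain ⟨b, hb⟩ : ∃ b, b = (v - u).2.val := ⟨_, rfl⟩
      have hv : u + a • ((1, 0) : ZMod n × ZMod n) + b • ((0, 1) : ZMod n × ZMod n) = v := by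
        ext <;> simp [ha, hb]
      have han : (a : ℝ) ≤ n := by exact_mod_cast ha ▸ (ZMod.val_lt _).le
      have hbn : (b : ℝ) ≤ n := by exact_mod_cast hb ▸ (ZMod.val_lt _).le
      have A := (abs_le.1 (abs_steps_le (step (1, 0) (by simp)) u a)).2
      have B := (abs_le.1 (abs_steps_le (step (0, 1) (by simp))
        (u + a • ((1, 0) : ZMod n × ZMod n)) b)).2
      rw [hv] at B
      have A' := mul_le_mul_of_nonneg_right han hnS
      have B' := mul_le_mul_of_nonneg_right hbn hnS
      linarith
    have hsum' : ∑ v, x v = ∑ _v : ZMod n × ZMod n, (0 : ℝ) := by simpa using hsum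
    obtain ⟨p, -, hp⟩ := Finset.exists_le_of_sum_le Finset.univ_nonempty hsum'.le
    obtain ⟨q, -, hq⟩ := Finset.exists_le_of_sum_le Finset.univ_nonempty hsum'.ge
    refine (pi_norm_le_iff_of_nonneg (by positivity)).2 fun v => ?_
    rw [Real.norm_eq_abs, abs_le]
    have := osc p v
    have := osc v q
    constructor <;> linarith
end
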